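/- Let K be a Hilbert space, let K₀ : K → L²(ℝⁿ) be a bounded everywhere defined operator with ran K₀ ⊂ H^{3/2}(ℝⁿ), and let α ∈ L^∞(ℝⁿ) ∩ L^p(ℝⁿ) with p ≥ 2 and p > 2n/3. Then α K₀ belongs to the Schatten–von Neumann class S_p. -/

import Mathlib

open MeasureTheory Filter Topology

noncomputable section

namespace RobinHS

/-- The boundary `ℝⁿ`, modelled as Euclidean space. -/
abbrev Bdy (n : ℕ) := EuclideanSpace ℝ (Fin n)

/-- The ambient space `ℝⁿ × ℝ ≅ ℝ^{n+1}`. -/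
abbrev Amb (n : ℕ) := Bdy n × ℝ

/-- The open upper half-space `ℝ^{n+1}_+`. -/
def half (n : ℕ) : Set (Amb n) := {x | 0 < x.2}

/-- Lebesgue measure restricted to the half-space. -/
abbrev μplus (n : ℕ) : Measure (Amb n) := volume.restrict (half n)

/-- `L²(ℝ^{n+1}_+)`. -/
abbrev Hplus (n : ℕ) := Lp ℂ 2 (μplus n)

/-- `L²(ℝⁿ)`. -/
abbrev Hbd (n : ℕ) := Lp ℂ 2 (volume : Measure (Bdy n))

/-- The coordinate directions of `ℝ^{n+1}`. -/
def dirs (n : ℕ) (i : Fin (n + 1)) : Amb n :=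
  if h : (i : ℕ) < n then (EuclideanSpace.single ⟨i, h⟩ (1 : ℝ), 0) else (0, 1)

/-- Real-valued test functions compactly supported in `U`. -/
def IsTest (n : ℕ) (U : Set (Amb n)) (φ : Amb n → ℝ) : Prop :=
  ContDiff ℝ (⊤ : ℕ∞) φ ∧ HasCompactSupport φ ∧ tsupport φ ⊆ U

/-- Complex-valued test functions compactly supported in `U`. -/
def IsTestC (n : ℕ) (U : Set (Amb n)) (φ : Amb n → ℂ) : Prop :=
  ContDiff ℝ (⊤ : ℕ∞) φ ∧ HasCompactSupport φ ∧ tsupport φ ⊆ U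

/-- `g` is the weak (distributional) derivative of `f` in direction `v` on `U`. -/
def IsWeakDeriv (n : ℕ) (U : Set (Amb n)) (v : Amb n) (f g : Amb n → ℂ) : Prop :=
  ∀ φ : Amb n → ℝ, IsTest n U φ →
    ∫ x in U, f x * ((fderiv ℝ φ x) v : ℂ) = - ∫ x in U, g x * (φ x : ℂ)

def MemL2 (n : ℕ) (U : Set (Amb n)) (f : Amb n → ℂ) : Prop :=
  MemLp f 2 (volume.restrict U)

/-- The Sobolev space `H¹(U)`. -/
def MemH1 (n : ℕ) (U : Set (Amb n)) (f : Amb n → ℂ) : Prop :=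
  MemL2 n U f ∧ ∀ i : Fin (n + 1), ∃ g, IsWeakDeriv n U (dirs n i) f g ∧ MemL2 n U g

/-- The Sobolev space `H²(U)`. -/
def MemH2 (n : ℕ) (U : Set (Amb n)) (f : Amb n → ℂ) : Prop :=
  MemL2 n U f ∧ ∀ i : Fin (n + 1), ∃ g, IsWeakDeriv n U (dirs n i) f g ∧ MemL2 n U g ∧
    ∀ j : Fin (n + 1), ∃ h, IsWeakDeriv n U (dirs n j) g h ∧ MemL2 n U h

/-- Finiteness of the Gagliardo seminorm of order `1/2` on `U ⊆ ℝ^{n+1}`. -/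
def Gag12 (n : ℕ) (U : Set (Amb n)) (g : Amb n → ℂ) : Prop :=
  Integrable (fun p : Amb n × Amb n => ‖g p.1 - g p.2‖ ^ 2 / ‖p.1 - p.2‖ ^ ((n : ℝ) + 2))
    ((volume.restrict U).prod (volume.restrict U))

/-- The fractional Sobolev space `H^{3/2}(U)` (Sobolev–Slobodeckij description). -/
def MemH32 (n : ℕ) (U : Set (Amb n)) (f : Amb n → ℂ) : Prop :=
  MemL2 n U f ∧ ∀ i : Fin (n + 1), ∃ g, IsWeakDeriv n U (dirs n i) f g ∧ MemL2 n U g ∧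
    Gag12 n U g

/-- The classical Laplacian of a test function. -/
def lapl (n : ℕ) (φ : Amb n → ℝ) (x : Amb n) : ℝ :=
  ∑ i : Fin (n + 1), fderiv ℝ (fun y => fderiv ℝ φ y (dirs n i)) x (dirs n i)

/-- `g = -Δ f` in the weak (distributional) sense on `U`. -/
def IsNegLap (n : ℕ) (U : Set (Amb n)) (f g : Amb n → ℂ) : Prop :=
  ∀ φ : Amb n → ℝ, IsTest n U φ →
    ∫ x in U, f x * (lapl n φ x : ℂ) = - ∫ x in U, g x * (φ x : ℂ)

/-- `b` is the Dirichlet boundary trace `f|_{ℝⁿ}` of `f` (as an `L²(ℝⁿ)` limit). -/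
def HasDTrace (n : ℕ) (f : Amb n → ℂ) (b : Bdy n → ℂ) : Prop :=
  Tendsto (fun t : ℝ => ∫ y : Bdy n, ‖f (y, t) - b y‖ ^ 2) (𝓝[>] (0 : ℝ)) (𝓝 (0 : ℝ))

/-- `b = ∂_ν f|_{ℝⁿ}` is the trace of the normal derivative of `f`, the normal pointing
outwards of the half-space (i.e. downwards). -/
def HasNTrace (n : ℕ) (f : Amb n → ℂ) (b : Bdy n → ℂ) : Prop :=
  ∃ f', IsWeakDeriv n (half n) ((0 : Bdy n), (1 : ℝ)) f f' ∧ HasDTrace n f' (fun y => - b y)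

/-- The Sobolev space `H²₀(ℝ^{n+1}_+)`: `H²`-functions approximable in the `H²`-norm by
smooth functions compactly supported in the open half-space. -/
def MemH20 (n : ℕ) (f : Amb n → ℂ) : Prop :=
  MemH2 n (half n) f ∧
  ∀ ε : ℝ, 0 < ε → ∃ φ : Amb n → ℂ, IsTestC n (half n) φ ∧
    (∫ x in half n, ‖f x - φ x‖ ^ 2) < ε ∧
    (∀ i : Fin (n + 1), ∀ g, IsWeakDeriv n (half n) (dirs n i) f g →
      (∫ x in half n, ‖g x - (fderiv ℝ φ x) (dirs n i)‖ ^ 2) < ε) ∧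
    (∀ i j : Fin (n + 1), ∀ g h, IsWeakDeriv n (half n) (dirs n i) f g →
      IsWeakDeriv n (half n) (dirs n j) g h →
      (∫ x in half n, ‖h x - (fderiv ℝ (fun y => (fderiv ℝ φ y) (dirs n i)) x) (dirs n j)‖ ^ 2) < ε)

/-- Membership in the domain of the Robin Laplacian `A_α`:
`f ∈ H²(ℝ^{n+1}_+)` with `∂_ν f|_{ℝⁿ} = α f|_{ℝⁿ}`. -/
def RobinDom (n : ℕ) (α : Bdy n → ℂ) (f : Amb n → ℂ) : Prop :=
  MemH2 n (half n) f ∧ ∃ b : Bdy n → ℂ, HasDTrace n f b ∧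
    HasNTrace n f (fun y => α y * b y)

/-- The graph relation of the Robin Laplacian `A_α` in `L²(ℝ^{n+1}_+)`: `w = A_α u`. -/
def RobinRel (n : ℕ) (α : Bdy n → ℂ) (u w : Hplus n) : Prop :=
  ∃ f g : Amb n → ℂ, ⇑u =ᵐ[μplus n] f ∧ ⇑w =ᵐ[μplus n] g ∧
    RobinDom n α f ∧ IsNegLap n (half n) f g

/-- The graph relation of the Neumann Laplacian `A_N` in `L²(ℝ^{n+1}_+)`. -/
def NeuRel (n : ℕ) (u w : Hplus n) : Prop :=
  ∃ f g : Amb n → ℂ, ⇑u =ᵐ[μplus n] f ∧ ⇑w =ᵐ[μplus n] g ∧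
    MemH2 n (half n) f ∧ HasNTrace n f (fun _ => 0) ∧ IsNegLap n (half n) f g

/-- Membership in `H^{3/2}_Δ(ℝ^{n+1}_+) = {f ∈ H^{3/2} : Δf ∈ L²}`. -/
def TDom (n : ℕ) (f : Amb n → ℂ) : Prop :=
  MemH32 n (half n) f ∧ ∃ L, IsNegLap n (half n) f L ∧ MemL2 n (half n) L

/-- The graph relation of the operator `T = -Δ` on `H^{3/2}_Δ(ℝ^{n+1}_+)`. -/
def TRel (n : ℕ) (u w : Hplus n) : Prop :=
  ∃ f g : Amb n → ℂ, ⇑u =ᵐ[μplus n] f ∧ ⇑w =ᵐ[μplus n] g ∧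
    TDom n f ∧ IsNegLap n (half n) f g

/-- The graph relation of `T` restricted to `ker Γ₀` (vanishing Neumann trace). -/
def TNeuRel (n : ℕ) (u w : Hplus n) : Prop :=
  ∃ f g : Amb n → ℂ, ⇑u =ᵐ[μplus n] f ∧ ⇑w =ᵐ[μplus n] g ∧
    TDom n f ∧ HasNTrace n f (fun _ => 0) ∧ IsNegLap n (half n) f g

/-- The graph relation of the minimal operator `A = -Δ` on `H²₀(ℝ^{n+1}_+)`. -/
def MinRel (n : ℕ) (u w : Hplus n) : Prop :=
  ∃ f g : Amb n → ℂ, ⇑u =ᵐ[μplus n] f ∧ ⇑w =ᵐ[μplus n] g ∧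
    MemH20 n f ∧ IsNegLap n (half n) f g

/-- `f ∈ ker (T - λ)`. -/
def EigSol (n : ℕ) (lam : ℂ) (f : Amb n → ℂ) : Prop :=
  TDom n f ∧ IsNegLap n (half n) f (fun x => lam * f x)

/-- `α ∈ W^{1,∞}(ℝⁿ)`: bounded with bounded (weak) first-order derivatives,
equivalently bounded and Lipschitz. -/
def IsW1inf (n : ℕ) (α : Bdy n → ℂ) : Prop :=
  (∃ C : ℝ, ∀ x, ‖α x‖ ≤ C) ∧ ∃ L : NNReal, LipschitzWith L α

/-- `‖α‖_∞ = sup_x |α(x)|`. -/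
def supNorm (n : ℕ) (α : Bdy n → ℂ) : ℝ := ⨆ x, ‖α x‖

/-- `γ` is the Poisson operator `γ(λ)` (the `γ`-field): it maps the Neumann trace
`∂_ν f_λ|_{ℝⁿ}` of `f_λ ∈ ker(T - λ)` to `f_λ`. -/
def IsPoissonOp (n : ℕ) (lam : ℂ) (γ : Hbd n →L[ℂ] Hplus n) : Prop :=
  ∀ (Φ : Hbd n) (a : Bdy n → ℂ) (f : Amb n → ℂ),
    ⇑Φ =ᵐ[(volume : Measure (Bdy n))] a → EigSol n lam f → HasNTrace n f a →
      ⇑(γ Φ) =ᵐ[μplus n] f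

/-- `M` is the Neumann-to-Dirichlet map `M(λ)` (the Weyl function): it maps the Neumann
trace of `f_λ ∈ ker(T - λ)` to its Dirichlet trace. -/
def IsNDMap (n : ℕ) (lam : ℂ) (M : Hbd n →L[ℂ] Hbd n) : Prop :=
  ∀ (Φ : Hbd n) (a b : Bdy n → ℂ) (f : Amb n → ℂ),
    ⇑Φ =ᵐ[(volume : Measure (Bdy n))] a → EigSol n lam f → HasNTrace n f a →
      HasDTrace n f b → ⇑(M Φ) =ᵐ[(volume : Measure (Bdy n))] b

/-- `M` is the bounded multiplication operator by `α` in `L²(ℝⁿ)`. -/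
def IsMultOp (n : ℕ) (α : Bdy n → ℂ) (M : Hbd n →L[ℂ] Hbd n) : Prop :=
  ∀ u : Hbd n, ⇑(M u) =ᵐ[(volume : Measure (Bdy n))] fun y => α y * u y

/-! Sobolev spaces on the boundary `ℝⁿ`. -/

def bdirs (n : ℕ) (i : Fin n) : Bdy n := EuclideanSpace.single i (1 : ℝ)

def IsTestB (n : ℕ) (φ : Bdy n → ℝ) : Prop := ContDiff ℝ (⊤ : ℕ∞) φ ∧ HasCompactSupport φ

def IsWeakDerivB (n : ℕ) (v : Bdy n) (f g : Bdy n → ℂ) : Prop :=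
  ∀ φ : Bdy n → ℝ, IsTestB n φ →
    ∫ y, f y * ((fderiv ℝ φ y) v : ℂ) = - ∫ y, g y * (φ y : ℂ)

/-- Finiteness of the Gagliardo seminorm of order `1/2` on `ℝⁿ`. -/
def GagB (n : ℕ) (g : Bdy n → ℂ) : Prop :=
  Integrable (fun p : Bdy n × Bdy n => ‖g p.1 - g p.2‖ ^ 2 / ‖p.1 - p.2‖ ^ ((n : ℝ) + 1))
    ((volume : Measure (Bdy n)).prod (volume : Measure (Bdy n)))

/-- The fractional Sobolev space `H^{3/2}(ℝⁿ)`. -/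
def MemH32B (n : ℕ) (f : Bdy n → ℂ) : Prop :=
  MemLp f 2 (volume : Measure (Bdy n)) ∧
  ∀ i : Fin n, ∃ g, IsWeakDerivB n (bdirs n i) f g ∧
    MemLp g 2 (volume : Measure (Bdy n)) ∧ GagB n g

/-! Abstract notions for (graph relations of) unbounded operators in Hilbert spaces,
Schatten–von Neumann classes, groups, spectra. -/

section Abstract

variable {H G : Type*} [NormedAddCommGroup H] [InnerProductSpace ℂ H] [CompleteSpace H]
  [NormedAddCommGroup G] [InnerProductSpace ℂ G] [CompleteSpace G]

/-- `R` is the (bounded, everywhere defined, two-sided) resolvent of the operator with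
graph relation `Rel` at the point `lam`. -/
def RelResolventAt (Rel : H → H → Prop) (lam : ℂ) (R : H →L[ℂ] H) : Prop :=
  (∀ u : H, Rel (R u) (u + lam • R u)) ∧
  (∀ u w : H, Rel u w → R (w - lam • u) = u)

/-- `lam` belongs to the resolvent set of the operator with graph relation `Rel`. -/
def RelInResolvent (Rel : H → H → Prop) (lam : ℂ) : Prop :=
  ∃ R : H →L[ℂ] H, RelResolventAt Rel lam R

/-- The graph relation of the adjoint operator. -/
def AdjRel (Rel : H → H → Prop) (u w : H) : Prop :=
  ∀ f g : H, Rel f g → (inner ℂ g u : ℂ) = (inner ℂ f w : ℂ)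

/-- Symmetry of the operator with graph relation `Rel`. -/
def IsSymmRel (Rel : H → H → Prop) : Prop :=
  ∀ u w f g : H, Rel u w → Rel f g → (inner ℂ w f : ℂ) = (inner ℂ u g : ℂ)

/-- Selfadjointness of the operator with graph relation `Rel`. -/
def IsSelfAdjRel (Rel : H → H → Prop) : Prop :=
  ∀ u w : H, Rel u w ↔ AdjRel Rel u w

/-- The operator with graph relation `Rel`, shifted by `lam`, is semi-Fredholm:
closed range, and finite-dimensional kernel or finite-codimensional range. -/
def SemiFredholmAt (Rel : H → H → Prop) (lam : ℂ) : Prop :=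
  IsClosed {v : H | ∃ u w, Rel u w ∧ v = w - lam • u} ∧
  ((∃ t : Finset H, {u : H | Rel u (lam • u)} ⊆ (Submodule.span ℂ (t : Set H) : Set H)) ∨
   (∃ t : Finset H,
      Submodule.span ℂ ((t : Set H) ∪ {v : H | ∃ u w, Rel u w ∧ v = w - lam • u}) = ⊤))

/-- The essential spectrum: points where the operator is not semi-Fredholm. -/
def EssSpec (Rel : H → H → Prop) : Set ℂ := {lam | ¬ SemiFredholmAt Rel lam}

/-- The `k`-th approximation number (`= (k+1)`-th singular value) of a bounded operator
between Hilbert spaces: the distance to operators of rank at most `k`. -/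
def sNum (T : H →L[ℂ] G) (k : ℕ) : ℝ :=
  ⨅ F : {F : H →L[ℂ] G // LinearMap.rank F.toLinearMap ≤ (k : Cardinal)}, ‖T - (F : H →L[ℂ] G)‖

/-- Membership in the Schatten–von Neumann ideal `S_p`: the singular values are
`p`-summable. -/
def MemSchatten (p : ℝ) (T : H →L[ℂ] G) : Prop :=
  IsCompactOperator ⇑T ∧ Summable (fun k : ℕ => sNum T k ^ p)

/-- Membership in the weak Schatten–von Neumann ideal `S_{p,∞}`:
`s_k(T) = O(k^{-1/p})`. -/
def MemWeakSchatten (p : ℝ) (T : H →L[ℂ] G) : Prop :=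
  IsCompactOperator ⇑T ∧ ∃ C : ℝ, ∀ k : ℕ, sNum T k ≤ C * ((k : ℝ) + 1) ^ (-(1 / p))

/-- `U` is the strongly continuous unitary group `t ↦ e^{-itA}` generated by the
selfadjoint operator `A` with graph relation `Rel`. -/
def IsUnitaryGroupFor (Rel : H → H → Prop) (U : ℝ → (H →L[ℂ] H)) : Prop :=
  U 0 = 1 ∧ (∀ s t : ℝ, U (s + t) = (U s).comp (U t)) ∧
  (∀ (t : ℝ) (f : H), ‖U t f‖ = ‖f‖) ∧
  (∀ f : H, Continuous fun t : ℝ => U t f) ∧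
  (∀ u w : H, Rel u w → ∀ t : ℝ, HasDerivAt (fun s : ℝ => U s u) ((-Complex.I) • (U t w)) t)

/-- `f` belongs to the absolutely continuous subspace of the selfadjoint operator
generating the unitary group `U`: its spectral measure `μ_f`, whose Fourier–Stieltjes
transform is `t ↦ ⟪f, U(t) f⟫`, has an integrable density w.r.t. Lebesgue measure. -/
def InAc (U : ℝ → (H →L[ℂ] H)) (f : H) : Prop :=
  ∃ h : ℝ → ℝ, Integrable h ∧ (∀ x, 0 ≤ h x) ∧
    ∀ t : ℝ, (inner ℂ f (U t f) : ℂ) = ∫ x : ℝ, Complex.exp ((-Complex.I) * t * x) * (h x : ℂ)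

/-- `lam` is in the resolvent set of the absolutely continuous part (the restriction to
the absolutely continuous subspace) of the operator with graph relation `Rel`. -/
def AcResolventAt (Rel : H → H → Prop) (U : ℝ → (H →L[ℂ] H)) (lam : ℂ) : Prop :=
  ∃ R : H →L[ℂ] H,
    (∀ f : H, InAc U f → InAc U (R f) ∧ Rel (R f) (f + lam • R f)) ∧
    (∀ u w : H, Rel u w → InAc U u → R (w - lam • u) = u)

/-- `W` is a complete wave operator for the pair of unitary groups `U₁`, `U₂` along the
filter `l` (`atTop` for `W₊`, `atBot` for `W₋`): the strong limits
`lim U₂(t)* U₁(t) f` exist on the absolutely continuous subspace of the first operator,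
`W` is isometric there, and its range is the absolutely continuous subspace of the
second operator. -/
def WaveProps (U₁ U₂ : ℝ → (H →L[ℂ] H)) (l : Filter ℝ) (W : H →L[ℂ] H) : Prop :=
  (∀ f : H, InAc U₁ f → Tendsto (fun t : ℝ => U₂ (-t) (U₁ t f)) l (𝓝 (W f))) ∧
  (∀ f : H, InAc U₁ f → ‖W f‖ = ‖f‖ ∧ InAc U₂ (W f)) ∧
  (∀ g : H, InAc U₂ g → ∃ f : H, InAc U₁ f ∧ W f = g)

/-- `V` implements a unitary equivalence between the absolutely continuous parts of the
operators generating `U₁` and `U₂`. -/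
def AcUnitEquiv (U₁ U₂ : ℝ → (H →L[ℂ] H)) (V : H →L[ℂ] H) : Prop :=
  (∀ f : H, InAc U₁ f → ‖V f‖ = ‖f‖ ∧ InAc U₂ (V f)) ∧
  (∀ g : H, InAc U₂ g → ∃ f : H, InAc U₁ f ∧ V f = g) ∧
  (∀ (t : ℝ) (f : H), InAc U₁ f → V (U₁ t f) = U₂ t (V f))

/-- The spectrum of the operator with graph relation `Rel`. -/
def SpecOf (Rel : H → H → Prop) : Set ℂ := {lam | ¬ RelInResolvent Rel lam}

/-- `u` is a generalized eigenvector (root vector) at `lam`: `(A - lam)^k u = 0`. -/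
def RootVec (Rel : H → H → Prop) (lam : ℂ) (u : H) : Prop :=
  ∃ (k : ℕ) (c : ℕ → H), c 0 = u ∧ c k = 0 ∧
    ∀ j, j < k → ∃ w, Rel (c j) w ∧ c (j + 1) = w - lam • c j

/-- The algebraic multiplicity of `lam`: the dimension of the space of root vectors,
expressed as the least cardinality of a finite spanning set. -/
def AlgMult (Rel : H → H → Prop) (lam : ℂ) : ℕ :=
  sInf {k : ℕ | ∃ t : Finset H, t.card = k ∧
    {u : H | RootVec Rel lam u} ⊆ (Submodule.span ℂ (t : Set H) : Set H)}

/-- The discrete spectrum: isolated eigenvalues of finite algebraic multiplicity. -/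
def DiscSpec (Rel : H → H → Prop) : Set ℂ :=
  {lam | lam ∈ SpecOf Rel ∧
    (∃ ε : ℝ, 0 < ε ∧ ∀ z ∈ SpecOf Rel, dist z lam < ε → z = lam) ∧
    (∃ u : H, u ≠ 0 ∧ Rel u (lam • u)) ∧
    ∃ t : Finset H, {u : H | RootVec Rel lam u} ⊆ (Submodule.span ℂ (t : Set H) : Set H)}

end Abstract

end RobinHS

namespace RobinHS

section SNum
set_option linter.unusedSectionVars false
variable {H G : Type} [NormedAddCommGroup H] [InnerProductSpace ℂ H] [CompleteSpace H]
  [NormedAddCommGroup G] [InnerProductSpace ℂ G] [CompleteSpace G]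

lemma sNum_bdd (T : H →L[ℂ] G) (k : ℕ) : BddBelow (Set.range
    fun F : {F : H →L[ℂ] G // LinearMap.rank F.toLinearMap ≤ (k : Cardinal)} => ‖T - (F : H →L[ℂ] G)‖) :=
  ⟨0, by rintro _ ⟨F, rfl⟩; exact norm_nonneg _⟩

instance sNum_ne (k : ℕ) : Nonempty {F : H →L[ℂ] G // LinearMap.rank F.toLinearMap ≤ (k : Cardinal)} :=
  ⟨⟨0, by simp [LinearMap.rank_zero]⟩⟩

lemma sNum_nonneg (T : H →L[ℂ] G) (k : ℕ) : 0 ≤ sNum T k :=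
  Real.iInf_nonneg fun _ => norm_nonneg _

lemma sNum_le (T F : H →L[ℂ] G) (k : ℕ) (hF : LinearMap.rank F.toLinearMap ≤ (k : Cardinal)) :
    sNum T k ≤ ‖T - F‖ :=
  ciInf_le (sNum_bdd T k) ⟨F, hF⟩

lemma sNum_anti (T : H →L[ℂ] G) : Antitone (sNum T) := by
  intro a b hab
  refine le_ciInf fun F => ?_
  exact sNum_le T F b (F.2.trans (by exact_mod_cast hab))

lemma exists_next (T : H →L[ℂ] G) (m : ℕ) (hpos : 0 < sNum T m) (e : Fin m → H) :
    ∃ x : H, ‖x‖ = 1 ∧ (∀ i, inner ℂ (e i) x = 0) ∧ sNum T m ≤ 2 * ‖T x‖ := by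
  classical
  set V : Submodule ℂ H := Submodule.span ℂ (Set.range e) with hV
  have : FiniteDimensional ℂ V := FiniteDimensional.span_of_finite ℂ (Set.finite_range e)
  have hrank : LinearMap.rank ((T ∘L V.starProjection).toLinearMap) ≤ (m : Cardinal) := by
    have h1 : LinearMap.range ((T ∘L V.starProjection).toLinearMap) ≤
        Submodule.map T.toLinearMap V := by
      rintro _ ⟨x, rfl⟩
      exact ⟨V.starProjection x, V.starProjection_apply_mem x, rfl⟩
    refine (Submodule.rank_mono h1).trans ((rank_map_le _ _).trans ?_)
    refine (rank_span_le _).trans ?_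
    exact Cardinal.mk_range_le.trans (by simp)
  have hle := sNum_le T _ m hrank
  have hlt : sNum T m / 2 < ‖T - T ∘L V.starProjection‖ := by linarith
  obtain ⟨x, hx⟩ : ∃ x, sNum T m / 2 * ‖x‖ < ‖(T - T ∘L V.starProjection) x‖ := by
    by_contra! hcon
    exact absurd (ContinuousLinearMap.opNorm_le_bound _ (by linarith) hcon) (not_le.2 hlt)
  set y := x - V.starProjection x with hy
  have hTy : (T - T ∘L V.starProjection) x = T y := by simp [hy]
  have hyV : y ∈ Vᗮ := by
    rw [hy]; exact V.sub_starProjection_mem_orthogonal x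
  have hynorm : ‖y‖ ≤ ‖x‖ := by
    have h2 : y = Vᗮ.starProjection x := by
      rw [hy, Submodule.starProjection_orthogonal]; rfl
    rw [h2]; exact Vᗮ.norm_starProjection_apply_le x
  rw [hTy] at hx
  have hTy0 : 0 < ‖T y‖ := lt_of_le_of_lt (by positivity) hx
  have hy0 : y ≠ 0 := by rintro h; simp [h] at hTy0
  have hyn : 0 < ‖y‖ := norm_pos_iff.2 hy0
  refine ⟨((‖y‖⁻¹ : ℝ) : ℂ) • y, ?_, ?_, ?_⟩
  · rw [norm_smul]; simp [hyn.ne']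
  · intro i
    rw [inner_smul_right, (Submodule.mem_orthogonal V y).1 hyV (e i) (Submodule.subset_span ⟨i, rfl⟩), mul_zero]
  · rw [map_smul, norm_smul]
    simp only [Complex.norm_real, norm_inv, norm_norm]
    have : sNum T m / 2 * ‖y‖ ≤ ‖T y‖ := le_trans (by gcongr) hx.le
    rw [← div_eq_inv_mul]
    have : sNum T m / 2 ≤ ‖T y‖ / ‖y‖ := by rwa [le_div_iff₀ hyn]
    linarith

lemma exists_family (T : H →L[ℂ] G) (hpos : ∀ m, 0 < sNum T m) (m : ℕ) :
    ∃ e : Fin m → H, Orthonormal ℂ e ∧ ∀ i : Fin m, sNum T i ≤ 2 * ‖T (e i)‖ := by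
  induction m with
  | zero => exact ⟨Fin.elim0, ⟨fun i => i.elim0, fun i => i.elim0⟩, fun i => i.elim0⟩
  | succ m ih =>
    obtain ⟨e, he, hT⟩ := ih
    obtain ⟨x, hx1, hx2, hx3⟩ := exists_next T m (hpos m) e
    refine ⟨Fin.snoc (α := fun _ => H) e x, ⟨?_, ?_⟩, ?_⟩
    · intro i
      refine Fin.lastCases ?_ (fun i => ?_) i
      · simpa using hx1
      · simpa using he.1 i
    · intro i j
      refine Fin.lastCases ?_ (fun i => ?_) i <;> refine Fin.lastCases ?_ (fun j => ?_) j
      · simp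
      · intro _; simpa using inner_eq_zero_symm.1 (hx2 j)
      · intro _; simpa using hx2 i
      · intro hij; simpa using he.2 (fun h => hij (by rw [h]))
    · intro i
      refine Fin.lastCases ?_ (fun i => ?_) i
      · simpa using hx3
      · simpa using hT i

lemma memSchatten_of_bound (T : H →L[ℂ] G) (p : ℝ) (hp : 0 < p) (C : ℝ)
    (h : ∀ (m : ℕ) (e : Fin m → H), Orthonormal ℂ e → ∑ i, ‖T (e i)‖ ^ p ≤ C) :
    MemSchatten p T := by
  have hsum : Summable (fun k : ℕ => sNum T k ^ p) := by
    by_cases hpos : ∀ m, 0 < sNum T m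
    · refine summable_of_sum_range_le (c := 2 ^ p * C) (fun k => Real.rpow_nonneg (sNum_nonneg T k) _) ?_
      intro m
      obtain ⟨e, he, hT⟩ := exists_family T hpos m
      rw [Finset.sum_range]
      calc ∑ i : Fin m, sNum T i ^ p ≤ ∑ i : Fin m, 2 ^ p * ‖T (e i)‖ ^ p := by
            refine Finset.sum_le_sum fun i _ => ?_
            rw [← Real.mul_rpow (by norm_num) (norm_nonneg _)]
            exact Real.rpow_le_rpow (sNum_nonneg T _) (hT i) hp.le
        _ = 2 ^ p * ∑ i : Fin m, ‖T (e i)‖ ^ p := by rw [Finset.mul_sum]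
        _ ≤ _ := by gcongr; exact h m e he
    · push Not at hpos
      obtain ⟨m, hm⟩ := hpos
      refine summable_of_ne_finset_zero (s := Finset.range m) ?_
      intro k hk
      have : sNum T k = 0 := le_antisymm ((sNum_anti T (by simpa using hk)).trans hm) (sNum_nonneg T k)
      rw [this, Real.zero_rpow hp.ne']
  refine ⟨?_, hsum⟩
  have h0 : Tendsto (fun k => sNum T k) atTop (𝓝 0) := by
    have := hsum.tendsto_atTop_zero.rpow_const (p := 1 / p) (Or.inr (by positivity))
    rw [Real.zero_rpow (by positivity)] at this
    refine this.congr fun k => ?_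
    rw [← Real.rpow_mul (sNum_nonneg T k), mul_one_div_cancel hp.ne', Real.rpow_one]
  have hex : ∀ k : ℕ, ∃ F : H →L[ℂ] G, LinearMap.rank F.toLinearMap ≤ (k : Cardinal) ∧
      ‖T - F‖ < sNum T k + 1 / ((k : ℝ) + 1) := by
    intro k
    obtain ⟨F, hF⟩ := exists_lt_of_ciInf_lt (show sNum T k < sNum T k + 1 / ((k : ℝ) + 1) by
      have : (0 : ℝ) < 1 / ((k : ℝ) + 1) := by positivity
      linarith)
    exact ⟨F.1, F.2, hF⟩
  choose F hF1 hF2 using hex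
  refine isCompactOperator_of_tendsto (F := F) (l := atTop) ?_ (Eventually.of_forall fun k => ?_)
  · rw [tendsto_iff_norm_sub_tendsto_zero]
    refine squeeze_zero (fun _ => norm_nonneg _) (fun k => ?_)
      (by simpa only [add_zero] using h0.add (tendsto_one_div_add_atTop_nhds_zero_nat (𝕜 := ℝ)))
    rw [norm_sub_rev]; exact (hF2 k).le
  · have hfd : FiniteDimensional ℂ (LinearMap.range (F k).toLinearMap) :=
      Module.rank_lt_aleph0_iff.1 ((hF1 k).trans_lt (Cardinal.natCast_lt_aleph0))
    have h1 : IsCompactOperator ((F k).rangeRestrict) :=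
      have : LocallyCompactSpace (LinearMap.range (F k).toLinearMap) :=
        have := FiniteDimensional.proper ℂ (LinearMap.range (F k).toLinearMap)
        inferInstance
      isCompactOperator_of_locallyCompactSpace_dom _
    exact h1.clm_comp (LinearMap.range (F k).toLinearMap).subtypeL
end SNum
end RobinHS

namespace RobinHS

/-- Translation on `L²(ℝⁿ)`. -/
def tau (n : ℕ) (z : Bdy n) : Hbd n →ₗᵢ[ℂ] Hbd n :=
  Lp.compMeasurePreservingₗᵢ ℂ (fun x => z + x) (measurePreserving_add_left volume z)

lemma tau_ae (n : ℕ) (z : Bdy n) (f : Hbd n) :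
    ⇑(tau n z f) =ᵐ[volume] fun x => f (z + x) :=
  Lp.coeFn_compMeasurePreserving _ _

lemma tau_cont (n : ℕ) (f : Hbd n) : Continuous fun z => tau n z f := by
  have : Continuous fun z : Bdy n => DomAddAct.mk z +ᵥ f := by
    have h2 : Fact ((2 : ENNReal) ≠ ⊤) := ⟨by simp⟩
    fun_prop
  exact this

lemma tau_tau (n : ℕ) (z w : Bdy n) (f : Hbd n) : tau n z (tau n w f) = tau n (z + w) f := by
  apply Lp.ext
  have h1 := (measurePreserving_add_left volume z).quasiMeasurePreserving.ae_eq_comp (tau_ae n w f)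
  filter_upwards [tau_ae n z (tau n w f), tau_ae n (z + w) f, h1] with x hx hx2 hx3
  rw [hx, hx2]
  simp only [Function.comp] at hx3
  rw [hx3]; congr 1; abel

lemma tau_zero (n : ℕ) (f : Hbd n) : tau n 0 f = f := by
  apply Lp.ext
  filter_upwards [tau_ae n 0 f] with x hx
  rw [hx, zero_add]

/-- volume of unit ball -/
def vol1 (n : ℕ) : ℝ := (volume : Measure (Bdy n)).real (Metric.ball 0 1)

lemma vol1_pos (n : ℕ) : 0 < vol1 n :=
  ENNReal.toReal_pos (Metric.measure_ball_pos volume _ one_pos).ne' measure_ball_lt_top.ne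

lemma integrableOn_ball (n : ℕ) {E : Type*} [NormedAddCommGroup E] {F : Bdy n → E}
    (hF : Continuous F) : IntegrableOn F (Metric.ball 0 1) volume :=
  (hF.locallyIntegrable.integrableOn_isCompact (isCompact_closedBall 0 1)).mono_set
    Metric.ball_subset_closedBall

lemma tau_cont' (n : ℕ) (h : ℝ) (f : Hbd n) : Continuous fun z => tau n (h • z) f :=
  (tau_cont n f).comp (continuous_const_smul h)

/-- Average over a ball of radius `h`. -/
def avg (n : ℕ) (h : ℝ) : Hbd n →L[ℂ] Hbd n :=
  LinearMap.mkContinuous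
    { toFun := fun f => (vol1 n)⁻¹ • ∫ z in Metric.ball (0 : Bdy n) 1, tau n (h • z) f
      map_add' := fun f g => by
        simp only [map_add]
        rw [integral_add (integrableOn_ball n (tau_cont' n h f)) (integrableOn_ball n (tau_cont' n h g)), smul_add]
      map_smul' := fun c f => by
        simp only [map_smul]
        rw [integral_smul, smul_comm]; rfl } 1 (by
    intro f
    simp only [LinearMap.coe_mk, AddHom.coe_mk, one_mul]
    rw [norm_smul, Real.norm_of_nonneg (inv_nonneg.2 (vol1_pos n).le), inv_mul_le_iff₀ (vol1_pos n), mul_comm]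
    refine norm_setIntegral_le_of_norm_le_const measure_ball_lt_top fun z _ => ?_
    simp)

lemma avg_apply (n : ℕ) (h : ℝ) (f : Hbd n) :
    avg n h f = (vol1 n)⁻¹ • ∫ z in Metric.ball (0 : Bdy n) 1, tau n (h • z) f := rfl

lemma avg_norm_le (n : ℕ) (h : ℝ) : ‖avg n h‖ ≤ 1 :=
  LinearMap.mkContinuous_norm_le _ zero_le_one _

lemma avg_tau (n : ℕ) (h : ℝ) (w : Bdy n) (f : Hbd n) : avg n h (tau n w f) = tau n w (avg n h f) := by
  have := (tau n w).toContinuousLinearMap.integral_comp_comm (integrableOn_ball n (tau_cont' n h f))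
  rw [avg_apply, avg_apply]
  have h2 : tau n w ((vol1 n)⁻¹ • ∫ z in Metric.ball (0 : Bdy n) 1, tau n (h • z) f) =
    (vol1 n)⁻¹ • tau n w (∫ z in Metric.ball (0 : Bdy n) 1, tau n (h • z) f) :=
    ((tau n w).toContinuousLinearMap.restrictScalars ℝ).map_smul _ _
  rw [h2]
  congr 1
  refine Eq.trans ?_ this
  congr 1
  ext1 z
  simp only [LinearIsometry.coe_toContinuousLinearMap, tau_tau, add_comm]

lemma avg_comm (n : ℕ) (h k : ℝ) (f : Hbd n) : avg n h (avg n k f) = avg n k (avg n h f) := by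
  conv_lhs => rw [avg_apply n k f]
  conv_rhs => rw [avg_apply n k]
  have h2 : avg n h ((vol1 n)⁻¹ • ∫ z in Metric.ball (0 : Bdy n) 1, tau n (k • z) f) =
    (vol1 n)⁻¹ • avg n h (∫ z in Metric.ball (0 : Bdy n) 1, tau n (k • z) f) :=
    ((avg n h).restrictScalars ℝ).map_smul _ _
  rw [h2, ← ContinuousLinearMap.integral_comp_comm _ (integrableOn_ball n (tau_cont' n k f))]
  simp only [avg_tau]

end RobinHS

namespace RobinHS

lemma lintegral_trans (n : ℕ) (F : Bdy n → ENNReal) (w : Bdy n) :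
    ∫⁻ x, F (w + x) = ∫⁻ x, F x := lintegral_add_left_eq_self F w

lemma lp_lintegral_lt_top (n : ℕ) (f : Hbd n) : ∫⁻ x, ‖f x‖ₑ ^ (2:ℝ) < ⊤ := by
  have := lintegral_rpow_enorm_lt_top_of_eLpNorm_lt_top (p := 2) (by simp) (by simp) (Lp.memLp f).2
  simpa using this

lemma prod_integrable (n : ℕ) (h : ℝ) (f : Hbd n) (s : Set (Bdy n)) (hs : volume s < ⊤) :
    Integrable (fun q : Bdy n × Bdy n => f (h • q.1 + q.2))
      ((volume.restrict (Metric.ball 0 1)).prod (volume.restrict s)) := by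
  have hm : Measurable (f : Bdy n → ℂ) := (Lp.stronglyMeasurable f).measurable
  have hm2 : Measurable (fun q : Bdy n × Bdy n => f (h • q.1 + q.2)) := by fun_prop
  refine ⟨hm2.aestronglyMeasurable, ?_⟩
  rw [HasFiniteIntegral, lintegral_prod _ hm2.enorm.aemeasurable]
  have hb : ∀ z : Bdy n, ∫⁻ x in s, ‖f (h • z + x)‖ₑ ≤ volume s + ∫⁻ x, ‖f x‖ₑ ^ (2:ℝ) := by
    intro z
    calc ∫⁻ x in s, ‖f (h • z + x)‖ₑ ≤ ∫⁻ x in s, (1 + ‖f (h • z + x)‖ₑ ^ (2:ℝ)) := by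
          refine lintegral_mono fun x => ?_
          rcases le_total (‖f (h • z + x)‖ₑ) 1 with h1 | h1
          · exact h1.trans le_self_add
          · calc ‖f (h • z + x)‖ₑ = ‖f (h • z + x)‖ₑ ^ (1:ℝ) := by rw [ENNReal.rpow_one]
              _ ≤ ‖f (h • z + x)‖ₑ ^ (2:ℝ) := ENNReal.rpow_le_rpow_of_exponent_le h1 (by norm_num)
              _ ≤ _ := le_add_self
      _ = volume s + ∫⁻ x in s, ‖f (h • z + x)‖ₑ ^ (2:ℝ) := by
          rw [lintegral_add_left measurable_const]; simp
      _ ≤ volume s + ∫⁻ x, ‖f (h • z + x)‖ₑ ^ (2:ℝ) := by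
          gcongr; exact Measure.restrict_le_self
      _ = _ := by rw [lintegral_trans n (fun y => ‖f y‖ₑ ^ (2:ℝ))]
  calc ∫⁻ z in Metric.ball 0 1, ∫⁻ x in s, ‖f (h • z + x)‖ₑ
      ≤ ∫⁻ z in Metric.ball (0 : Bdy n) 1, (volume s + ∫⁻ x, ‖f x‖ₑ ^ (2:ℝ)) :=
        lintegral_mono hb
    _ < ⊤ := by
        rw [setLIntegral_const]
        exact ENNReal.mul_lt_top (ENNReal.add_lt_top.2 ⟨hs, lp_lintegral_lt_top n f⟩) measure_ball_lt_top

lemma avg_ae (n : ℕ) (h : ℝ) (f : Hbd n) :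
    ⇑(avg n h f) =ᵐ[volume] fun x => (vol1 n)⁻¹ • ∫ z in Metric.ball (0 : Bdy n) 1, f (h • z + x) := by
  apply ae_eq_of_forall_setIntegral_eq_of_sigmaFinite
  · intro s hs hs'
    exact integrableOn_Lp_of_measure_ne_top _ (by norm_num) hs'.ne
  · intro s hs hs'
    exact ((prod_integrable n h f s hs').integral_prod_right).smul (vol1 n)⁻¹
  · intro s hs hs'
    rw [integral_smul, ← L2.inner_indicatorConstLp_one (𝕜 := ℂ) hs hs'.ne]
    have h2 : inner ℂ (indicatorConstLp 2 hs hs'.ne (1:ℂ)) (avg n h f) =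
        (vol1 n)⁻¹ • inner ℂ (indicatorConstLp 2 hs hs'.ne (1:ℂ))
          (∫ z in Metric.ball (0 : Bdy n) 1, tau n (h • z) f) :=
      ((innerSL ℂ (indicatorConstLp 2 hs hs'.ne (1:ℂ))).restrictScalars ℝ).map_smul _ _
    rw [h2]
    congr 1
    rw [← integral_inner (integrableOn_ball n (tau_cont' n h f))]
    simp only [L2.inner_indicatorConstLp_one]
    rw [← integral_integral_swap (f := fun z x => f (h • z + x)) (prod_integrable n h f s hs')]
    congr 1
    ext1 z
    exact integral_congr_ae (ae_restrict_of_ae (tau_ae n (h • z) f))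

/-- The representing vector of the average at `x`. -/
def rep (n : ℕ) (h : ℝ) (x : Bdy n) : Hbd n :=
  indicatorConstLp 2 (measurableSet_ball (x := x) (ε := h)) measure_ball_lt_top.ne
    (((vol1 n * h ^ n)⁻¹ : ℝ) : ℂ)

lemma vol_ball (n : ℕ) (h : ℝ) (hh : 0 < h) (x : Bdy n) :
    (volume : Measure (Bdy n)).real (Metric.ball x h) = vol1 n * h ^ n := by
  rw [vol1, Measure.real, Measure.addHaar_ball_of_pos _ _ hh, ENNReal.toReal_mul,
    ENNReal.toReal_ofReal (by positivity), mul_comm, Measure.real]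
  simp

lemma rep_norm (n : ℕ) (h : ℝ) (hh : 0 < h) (x : Bdy n) :
    ‖rep n h x‖ ^ 2 = (vol1 n * h ^ n)⁻¹ := by
  have hv := vol1_pos n
  have : 0 < vol1 n * h ^ n := by positivity
  rw [rep, norm_indicatorConstLp (by simp) (by simp), vol_ball n h hh]
  simp only [ENNReal.toReal_ofNat, Complex.norm_real, norm_inv]
  rw [Real.norm_of_nonneg this.le, mul_pow, ← Real.rpow_natCast (_ ^ (1 / (2:ℝ))), ← Real.rpow_mul this.le]
  norm_num
  field_simp

lemma avg_rep (n : ℕ) (h : ℝ) (hh : 0 < h) (f : Hbd n) :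
    ∀ᵐ x, avg n h f x = inner ℂ (rep n h x) f := by
  filter_upwards [avg_ae n h f] with x hx
  rw [hx, rep, L2.inner_indicatorConstLp_eq_inner_setIntegral]
  have h1 : ∫ z in Metric.ball (0 : Bdy n) 1, f (h • z + x) =
      (h ^ n)⁻¹ • ∫ y in Metric.ball x h, f y := by
    have h3 : (fun z : Bdy n => h • z + x) ⁻¹' (Metric.ball x h) = Metric.ball 0 1 := by
      ext z
      simp [norm_smul, abs_of_pos hh, hh]
    rw [← integral_indicator measurableSet_ball, ← integral_indicator measurableSet_ball]
    have := Measure.integral_comp_smul (volume : Measure (Bdy n))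
      (fun w => (Metric.ball x h).indicator f (w + x)) h
    rw [integral_add_right_eq_self (fun w => (Metric.ball x h).indicator f w)] at this
    simp only [finrank_euclideanSpace, Fintype.card_fin] at this
    rw [abs_of_pos (by positivity)] at this
    rw [← this]
    congr 1
    ext1 z
    rw [← h3]
    rfl
  rw [h1]
  simp [mul_comm, mul_assoc, mul_left_comm]

lemma smooth_bound (n : ℕ) {K : Type} [NormedAddCommGroup K] [InnerProductSpace ℂ K]
    [CompleteSpace K] (S : K →L[ℂ] Hbd n) (h : ℝ) (hh : 0 < h) (m : ℕ) (e : Fin m → K)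
    (he : Orthonormal ℂ e) :
    ∀ᵐ x, ∑ i, ‖avg n h (S (e i)) x‖ ^ 2 ≤ ‖S‖ ^ 2 * (vol1 n * h ^ n)⁻¹ := by
  have : ∀ᵐ x, ∀ i, avg n h (S (e i)) x = inner ℂ (rep n h x) (S (e i)) :=
    ae_all_iff.2 fun i => avg_rep n h hh (S (e i))
  filter_upwards [this] with x hx
  calc ∑ i, ‖avg n h (S (e i)) x‖ ^ 2 = ∑ i, ‖inner ℂ (e i) (S.adjoint (rep n h x))‖ ^ 2 := by
        refine Finset.sum_congr rfl fun i _ => ?_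
        rw [hx, ContinuousLinearMap.adjoint_inner_right, norm_inner_symm]
    _ ≤ ‖S.adjoint (rep n h x)‖ ^ 2 := he.sum_inner_products_le _
    _ ≤ (‖S‖ * ‖rep n h x‖) ^ 2 := by
        gcongr
        refine (ContinuousLinearMap.le_opNorm _ _).trans_eq ?_
        rw [LinearIsometryEquiv.norm_map]
    _ = _ := by rw [mul_pow, rep_norm n h hh]

end RobinHS

namespace RobinHS

lemma enorm_sq (n : ℕ) (f : Hbd n) : ‖f‖ₑ ^ (2:ℝ) = ∫⁻ x, ‖f x‖ₑ ^ (2:ℝ) := by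
  rw [Lp.enorm_def, eLpNorm_eq_lintegral_rpow_enorm_toReal (by simp) (by simp)]
  simp only [ENNReal.toReal_ofNat]
  rw [← ENNReal.rpow_mul]; norm_num

lemma holder_bound (n : ℕ) (α : Bdy n → ℂ) (hα : AEStronglyMeasurable α volume) (p : ℝ) (hp : 2 ≤ p)
    (F G : Hbd n) (hG : ⇑G =ᵐ[volume] fun x => α x * F x) :
    ‖G‖ₑ ^ p ≤ (∫⁻ x, ‖α x‖ₑ ^ p * ‖F x‖ₑ ^ (2:ℝ)) * ‖F‖ₑ ^ (p - 2) := by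
  have hp0 : 0 < p := by linarith
  have hF : AEMeasurable (fun x => ‖F x‖ₑ) volume := (Lp.aestronglyMeasurable F).enorm
  have h1 : ‖G‖ₑ ^ (2:ℝ) ≤ (∫⁻ x, ‖α x‖ₑ ^ p * ‖F x‖ₑ ^ (2:ℝ)) ^ (2 / p) *
      (∫⁻ x, ‖F x‖ₑ ^ (2:ℝ)) ^ (1 - 2 / p) := by
    rw [enorm_sq]
    refine le_trans (le_of_eq ?_) (ENNReal.lintegral_mul_norm_pow_le
      ((hα.enorm.pow_const p).mul (hF.pow_const 2)) (hF.pow_const (2:ℝ))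
      (by positivity) (sub_nonneg.2 ((div_le_one hp0).2 hp)) (by ring))
    refine lintegral_congr_ae ?_
    filter_upwards [hG] with x hx
    rw [hx, enorm_mul, ENNReal.mul_rpow_of_nonneg _ _ (by norm_num)]
    simp only [Pi.mul_apply]
    rw [ENNReal.mul_rpow_of_nonneg _ _ (by positivity), ← ENNReal.rpow_mul, ← ENNReal.rpow_mul, ← ENNReal.rpow_mul,
      mul_assoc, ← ENNReal.rpow_add_of_nonneg _ _ (by positivity)
        (mul_nonneg (by norm_num) (sub_nonneg.2 ((div_le_one hp0).2 hp)))]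
    congr 2
    · field_simp
    · ring
  rw [← enorm_sq] at h1
  have h2 := ENNReal.rpow_le_rpow h1 (show 0 ≤ p / 2 by positivity)
  rw [ENNReal.mul_rpow_of_nonneg _ _ (by positivity), ← ENNReal.rpow_mul, ← ENNReal.rpow_mul, ← ENNReal.rpow_mul,
    ← ENNReal.rpow_mul] at h2
  have e1 : 2 * (p / 2) = p := by ring
  have e2 : 2 / p * (p / 2) = 1 := by field_simp
  have e3 : 2 * ((1 - 2 / p) * (p / 2)) = p - 2 := by field_simp
  rwa [e1, e2, e3, ENNReal.rpow_one] at h2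

lemma sum_bound (n : ℕ) (α : Bdy n → ℂ) (p : ℝ) (hp : 2 ≤ p)
    (hα : MemLp α (ENNReal.ofReal p) (volume : Measure (Bdy n)))
    {K : Type} [NormedAddCommGroup K] [InnerProductSpace ℂ K]
    [CompleteSpace K] (S : K →L[ℂ] Hbd n) (h : ℝ) (hh : 0 < h) (m : ℕ) (e : Fin m → K)
    (he : Orthonormal ℂ e) (G : Fin m → Hbd n)
    (hG : ∀ i, ⇑(G i) =ᵐ[volume] fun x => α x * avg n h (S (e i)) x) :
    ∑ i, ‖G i‖ ^ p ≤ (∫⁻ x, ‖α x‖ₑ ^ p).toReal * (vol1 n * h ^ n)⁻¹ * ‖S‖ ^ p := by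
  have hp0 : 0 < p := by linarith
  have hv := vol1_pos n
  have hA : ∫⁻ x, ‖α x‖ₑ ^ p < ⊤ := by
    have := lintegral_rpow_enorm_lt_top_of_eLpNorm_lt_top (by simpa using hp0) (by simp) hα.2
    rwa [ENNReal.toReal_ofReal hp0.le] at this
  have hFn : ∀ i, ‖avg n h (S (e i))‖ ≤ ‖S‖ := by
    intro i
    calc ‖avg n h (S (e i))‖ ≤ 1 * ‖S (e i)‖ :=
          (ContinuousLinearMap.le_opNorm _ _).trans (by gcongr; exact avg_norm_le n h)
      _ ≤ ‖S‖ := by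
          rw [one_mul]; refine (S.le_opNorm _).trans_eq ?_; rw [he.1 i, mul_one]
  have hFm : ∀ i, AEMeasurable (fun x => ‖avg n h (S (e i)) x‖ₑ) volume := fun i =>
    (Lp.aestronglyMeasurable _).enorm
  have key : ∑ i, ‖G i‖ₑ ^ p ≤ ENNReal.ofReal ((∫⁻ x, ‖α x‖ₑ ^ p).toReal * (vol1 n * h ^ n)⁻¹ * ‖S‖ ^ p) := by
    calc ∑ i, ‖G i‖ₑ ^ p ≤ ∑ i, (∫⁻ x, ‖α x‖ₑ ^ p * ‖avg n h (S (e i)) x‖ₑ ^ (2:ℝ)) * ‖S‖ₑ ^ (p - 2) := by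
          refine Finset.sum_le_sum fun i _ => (holder_bound n α hα.1 p hp _ _ (hG i)).trans ?_
          refine mul_le_mul' le_rfl (ENNReal.rpow_le_rpow ?_ (by linarith))
          rw [← ofReal_norm, ← ofReal_norm]; exact ENNReal.ofReal_le_ofReal (hFn i)
      _ = (∫⁻ x, ‖α x‖ₑ ^ p * ∑ i, ‖avg n h (S (e i)) x‖ₑ ^ (2:ℝ)) * ‖S‖ₑ ^ (p - 2) := by
          rw [← Finset.sum_mul, ← lintegral_finsetSum']
          · simp only [Finset.mul_sum]
          · intro i _
            exact (hα.1.enorm.pow_const p).mul ((hFm i).pow_const 2)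
      _ ≤ (∫⁻ x, ‖α x‖ₑ ^ p * ENNReal.ofReal (‖S‖ ^ 2 * (vol1 n * h ^ n)⁻¹)) * ‖S‖ₑ ^ (p - 2) := by
          gcongr ?_ * _
          refine lintegral_mono_ae ?_
          filter_upwards [smooth_bound n S h hh m e he] with x hx
          gcongr
          refine le_trans (le_of_eq ?_) (ENNReal.ofReal_le_ofReal hx)
          rw [ENNReal.ofReal_sum_of_nonneg (fun i _ => by positivity)]
          refine Finset.sum_congr rfl fun i _ => ?_
          rw [ENNReal.ofReal_pow (norm_nonneg _), ofReal_norm]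
          norm_num
      _ = _ := by
          rw [lintegral_mul_const' _ _ ENNReal.ofReal_ne_top, mul_assoc, mul_assoc, ENNReal.ofReal_mul ENNReal.toReal_nonneg,
            ENNReal.ofReal_toReal hA.ne]
          congr 1
          rw [← ofReal_norm, ENNReal.ofReal_rpow_of_nonneg (norm_nonneg _) (by linarith),
            ← ENNReal.ofReal_mul (by positivity)]
          congr 1
          rw [mul_comm (‖S‖ ^ 2), mul_assoc]
          congr 1
          rw [← Real.rpow_natCast, ← Real.rpow_add_of_nonneg (norm_nonneg _) (by norm_num) (by linarith)]
          norm_num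
  refine (ENNReal.ofReal_le_ofReal_iff (by positivity)).1 ?_
  refine le_trans (le_of_eq ?_) key
  rw [ENNReal.ofReal_sum_of_nonneg (fun i _ => by positivity)]
  refine Finset.sum_congr rfl fun i _ => ?_
  rw [← ofReal_norm, ENNReal.ofReal_rpow_of_nonneg (norm_nonneg _) hp0.le]

end RobinHS

namespace RobinHS

lemma test_memLp (n : ℕ) (φ : Bdy n → ℝ) (hφ : IsTestB n φ) :
    MemLp (fun x => (φ x : ℂ)) 2 (volume : Measure (Bdy n)) :=
  Continuous.memLp_of_hasCompactSupport (Complex.continuous_ofReal.comp hφ.1.continuous)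
    (hφ.2.comp_left Complex.ofReal_zero)

/-- pairing with a test function -/
def pairing (n : ℕ) (φ : Bdy n → ℝ) (hφ : IsTestB n φ) : Hbd n →L[ℂ] ℂ :=
  innerSL ℂ ((test_memLp n φ hφ).toLp _)

lemma pairing_apply (n : ℕ) (φ : Bdy n → ℝ) (hφ : IsTestB n φ) (F : Hbd n) :
    pairing n φ hφ F = ∫ x, F x * (φ x : ℂ) := by
  rw [pairing, innerSL_apply_apply, L2.inner_def]
  refine integral_congr_ae ?_
  filter_upwards [(test_memLp n φ hφ).coeFn_toLp] with x hx
  rw [hx]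
  simp [mul_comm]

lemma eq_of_pairing (n : ℕ) (F G : Hbd n)
    (h : ∀ φ (hφ : IsTestB n φ), pairing n φ hφ F = pairing n φ hφ G) : F = G := by
  apply Lp.ext
  refine ae_eq_of_integral_contDiff_smul_eq ((Lp.memLp F).locallyIntegrable (by norm_num))
    ((Lp.memLp G).locallyIntegrable (by norm_num)) fun φ h1 h2 => ?_
  have hφ : IsTestB n φ := ⟨h1, h2⟩
  have := h φ hφ
  rw [pairing_apply n φ hφ, pairing_apply n φ hφ] at this
  simpa [mul_comm] using this

lemma test_trans (n : ℕ) (φ : Bdy n → ℝ) (hφ : IsTestB n φ) (z : Bdy n) :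
    IsTestB n (fun x => φ (x - z)) := by
  refine ⟨hφ.1.comp (contDiff_id.sub contDiff_const), ?_⟩
  have := hφ.2.comp_homeomorph (Homeomorph.subRight z)
  exact this

lemma pairing_tau (n : ℕ) (φ : Bdy n → ℝ) (hφ : IsTestB n φ) (z : Bdy n) (F : Hbd n) :
    pairing n φ hφ (tau n z F) = ∫ x, F x * (φ (x - z) : ℂ) := by
  rw [pairing_apply]
  conv_rhs => rw [← integral_add_left_eq_self _ z]
  refine integral_congr_ae ?_
  filter_upwards [tau_ae n z F] with x hx
  rw [hx]; simp

lemma test_fderiv (n : ℕ) (φ : Bdy n → ℝ) (hφ : IsTestB n φ) (z : Bdy n) :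
    Continuous (fun x => fderiv ℝ φ x z) ∧ HasCompactSupport (fun x => fderiv ℝ φ x z) := by
  constructor
  · exact (hφ.1.continuous_fderiv (by simp)).clm_apply continuous_const
  · exact (hφ.2.fderiv ℝ).comp_left (g := fun L : Bdy n →L[ℝ] ℝ => L z) rfl

lemma pairing_deriv (n : ℕ) (φ : Bdy n → ℝ) (hφ : IsTestB n φ) (z : Bdy n) (F G : Hbd n)
    (hG : IsWeakDerivB n z F G) (s : ℝ) :
    HasDerivAt (fun s : ℝ => pairing n φ hφ (tau n (s • z) F)) (pairing n φ hφ (tau n (s • z) G)) s := by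
  have e0 : (fun s : ℝ => pairing n φ hφ (tau n (s • z) F)) = fun s => ∫ x, F x * (φ (x - s • z) : ℂ) := by
    ext s; rw [pairing_tau]
  have e1 : pairing n φ hφ (tau n (s • z) G) = ∫ x, F x * (((-(fderiv ℝ φ (x - s • z) z) : ℝ)) : ℂ) := by
    rw [pairing_tau]
    have := hG _ (test_trans n φ hφ (s • z))
    simp only [fderiv_comp_sub] at this
    rw [eq_neg_iff_add_eq_zero, ← eq_neg_iff_add_eq_zero, eq_comm, neg_eq_iff_eq_neg] at this
    rw [this, ← integral_neg]
    simp
  rw [e0, e1]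
  obtain ⟨hc, hs⟩ := test_fderiv n φ hφ z
  obtain ⟨M, hM⟩ := hc.bounded_above_of_compact_support hs
  obtain ⟨R, hR⟩ := hs.isCompact.isBounded.subset_closedBall (0 : Bdy n)
  have hFl : LocallyIntegrable (F : Bdy n → ℂ) volume := (Lp.memLp F).locallyIntegrable (by norm_num)
  have hFm := Lp.aestronglyMeasurable F
  have hmeas : ∀ t : ℝ, AEStronglyMeasurable (fun x => F x * (φ (x - t • z) : ℂ)) volume := fun t =>
    hFm.mul (Complex.continuous_ofReal.comp (test_trans n φ hφ (t • z)).1.continuous).aestronglyMeasurable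
  refine (hasDerivAt_integral_of_dominated_loc_of_deriv_le
    (F' := fun t x => F x * (((-(fderiv ℝ φ (x - t • z) z) : ℝ)) : ℂ))
    (bound := (Metric.closedBall (0 : Bdy n) (R + (|s| + 1) * ‖z‖)).indicator fun x => ‖F x‖ * M)
    (Metric.ball_mem_nhds s one_pos) (Eventually.of_forall hmeas) ?_ ?_ ?_ ?_ ?_).2
  · exact (Lp.memLp F).integrable_mul (test_memLp n _ (test_trans n φ hφ (s • z)))
  · refine hFm.mul (Continuous.aestronglyMeasurable ?_)
    exact Complex.continuous_ofReal.comp (hc.comp (continuous_id.sub continuous_const)).neg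
  · refine Eventually.of_forall fun x t ht => ?_
    by_cases hx : x - t • z ∈ tsupport (fun x => fderiv ℝ φ x z)
    · rw [Set.indicator_of_mem]
      · rw [norm_mul, Complex.norm_real, norm_neg]
        exact mul_le_mul_of_nonneg_left (hM _) (norm_nonneg _)
      · have h1 := hR hx
        rw [mem_closedBall_zero_iff] at h1 ⊢
        have h2 : |t| ≤ |s| + 1 := by
          rw [Metric.mem_ball, Real.dist_eq] at ht
          have := abs_sub_abs_le_abs_sub t s
          linarith
        calc ‖x‖ = ‖(x - t • z) + t • z‖ := by simp
          _ ≤ ‖x - t • z‖ + |t| * ‖z‖ := (norm_add_le _ _).trans_eq (by rw [norm_smul, Real.norm_eq_abs])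
          _ ≤ _ := by gcongr
    · have : fderiv ℝ φ (x - t • z) z = 0 := image_eq_zero_of_notMem_tsupport (f := fun x => fderiv ℝ φ x z) hx
      rw [this]
      simp only [neg_zero, Complex.ofReal_zero, mul_zero, norm_zero]
      refine Set.indicator_nonneg (fun x _ => ?_) _
      exact mul_nonneg (norm_nonneg _) ((norm_nonneg _).trans (hM 0))
  · refine IntegrableOn.integrable_indicator ?_ Metric.isClosed_closedBall.measurableSet
    exact ((hFl.integrableOn_isCompact (isCompact_closedBall _ _)).norm).mul_const M
  · refine Eventually.of_forall fun x t _ => ?_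
    have h1 : HasFDerivAt φ (fderiv ℝ φ (x - t • z)) (x - t • z) :=
      (hφ.1.differentiable (by simp) _).hasFDerivAt
    have h2 : HasDerivAt (fun t : ℝ => x - t • z) (-z) t := by
      simpa using ((hasDerivAt_id t).smul_const z).const_sub x
    have h3 := h1.comp_hasDerivAt t h2
    rw [map_neg] at h3
    exact (h3.ofReal_comp).const_mul (F x)

lemma tau_line_cont (n : ℕ) (z : Bdy n) (G : Hbd n) : Continuous fun s : ℝ => tau n (s • z) G :=
  (tau_cont n G).comp (continuous_id.smul continuous_const)

lemma tau_sub (n : ℕ) (z : Bdy n) (F G : Hbd n) (hG : IsWeakDerivB n z F G) :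
    tau n z F - F = ∫ s in (0:ℝ)..1, tau n (s • z) G := by
  apply eq_of_pairing
  intro φ hφ
  have hi := (tau_line_cont n z G).intervalIntegrable (μ := volume) 0 1
  rw [← ContinuousLinearMap.intervalIntegral_comp_comm _ hi,
    intervalIntegral.integral_eq_sub_of_hasDerivAt (fun s _ => pairing_deriv n φ hφ z F G hG s)
      (((pairing n φ hφ).continuous.comp (tau_line_cont n z G)).intervalIntegrable _ _)]
  simp [tau_zero]

lemma weak_neg (n : ℕ) (z : Bdy n) (F G : Hbd n) (hG : IsWeakDerivB n z F G) :
    IsWeakDerivB n (-z) F (-G : Hbd n) := by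
  intro φ hφ
  have := hG φ hφ
  simp only [map_neg, Complex.ofReal_neg, mul_neg, integral_neg]
  rw [this, neg_neg, ← integral_neg]
  refine integral_congr_ae ?_
  filter_upwards [Lp.coeFn_neg G] with x hx
  rw [hx]; simp

lemma tau_sub2 (n : ℕ) (z : Bdy n) (F G : Hbd n) (hG : IsWeakDerivB n z F G) :
    (tau n z F - F) + (tau n (-z) F - F) = ∫ s in (0:ℝ)..1, (tau n (s • z) G - tau n (s • (-z)) G) := by
  rw [tau_sub n z F G hG, tau_sub n (-z) F (-G) (weak_neg n z F G hG), intervalIntegral.integral_sub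
    ((tau_line_cont n z G).intervalIntegrable 0 1) ((tau_line_cont n (-z) G).intervalIntegrable 0 1)]
  simp only [map_neg, intervalIntegral.integral_neg, sub_eq_add_neg]

lemma tau_diff_enorm (n : ℕ) (s : ℝ) (z : Bdy n) (G : Hbd n) :
    ‖tau n (s • z) G - tau n (s • (-z)) G‖ₑ = ‖tau n ((2 * s) • z) G - G‖ₑ := by
  have : tau n (s • z) G - tau n (s • (-z)) G = tau n (s • (-z)) (tau n ((2 * s) • z) G - G) := by
    rw [map_sub, tau_tau]
    congr 3
    rw [smul_neg, mul_smul, two_smul]; abel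
  rw [this, ← ofReal_norm, LinearIsometry.norm_map, ofReal_norm]

lemma tau_sub2_enorm (n : ℕ) (z : Bdy n) (F G : Hbd n) (hG : IsWeakDerivB n z F G) :
    ‖(tau n z F - F) + (tau n (-z) F - F)‖ₑ ≤
      ∫⁻ s in Set.Ioc (0:ℝ) 1, ‖tau n ((2 * s) • z) G - G‖ₑ := by
  rw [tau_sub2 n z F G hG, intervalIntegral.integral_of_le zero_le_one]
  refine (enorm_integral_le_lintegral_enorm _).trans_eq ?_
  simp only [tau_diff_enorm]

lemma weak_sum (n : ℕ) (F : Hbd n) (G : Fin n → Hbd n)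
    (hG : ∀ i, IsWeakDerivB n (bdirs n i) F (G i)) (z : Bdy n) :
    IsWeakDerivB n z F (∑ i, ((z i : ℝ) : ℂ) • G i : Hbd n) := by
  intro φ hφ
  have hz : z = ∑ i, z i • bdirs n i := by
    ext j
    simp [bdirs, Pi.single_apply]
  have h1 : ∀ x, fderiv ℝ φ x z = ∑ i, z i * fderiv ℝ φ x (bdirs n i) := by
    intro x
    conv_lhs => rw [hz]
    simp
  simp only [h1]
  have h2 : ∫ y, (∑ i, ((z i : ℝ) : ℂ) • G i : Hbd n) y * (φ y : ℂ) =
      ∑ i, ((z i : ℝ) : ℂ) * ∫ y, G i y * (φ y : ℂ) := by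
    rw [← pairing_apply n φ hφ, map_sum]
    simp only [map_smul, pairing_apply, smul_eq_mul]
  rw [h2, ← Finset.sum_neg_distrib]
  simp only [Complex.ofReal_sum, Finset.mul_sum]
  rw [integral_finsetSum]
  · refine Finset.sum_congr rfl fun i _ => ?_
    rw [← mul_neg, ← hG i φ hφ, ← integral_const_mul]
    congr 1; ext x; push_cast; ring
  · intro i _
    obtain ⟨hc, hs⟩ := test_fderiv n φ hφ (bdirs n i)
    have hm : MemLp (fun x => ((z i * fderiv ℝ φ x (bdirs n i) : ℝ) : ℂ)) 2 (volume : Measure (Bdy n)) := by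
      refine Continuous.memLp_of_hasCompactSupport (Complex.continuous_ofReal.comp (continuous_const.mul hc)) ?_
      exact (hs.comp_left (g := fun t : ℝ => ((z i * t : ℝ) : ℂ)) (by simp))
    exact (Lp.memLp F).integrable_mul hm

end RobinHS

namespace RobinHS

/-- Gagliardo weight -/
def gk (n : ℕ) (w : Bdy n) : ENNReal := ENNReal.ofReal ((‖w‖ ^ ((n : ℝ) + 1))⁻¹)

lemma gk_meas (n : ℕ) : Measurable (gk n) := by
  unfold gk
  have : Measurable fun w : Bdy n => ‖w‖ ^ ((n : ℝ) + 1) :=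
    (Continuous.rpow_const continuous_norm (fun _ => Or.inr (by positivity))).measurable
  exact this.inv.ennreal_ofReal

lemma gag_lt_top (n : ℕ) (g : Bdy n → ℂ) (hg : MemLp g 2 volume) (hG : GagB n g) (G : Hbd n)
    (hGg : ⇑G =ᵐ[volume] g) :
    ∫⁻ w, gk n w * ‖tau n w G - G‖ₑ ^ (2:ℝ) < ⊤ := by
  have h1 := hG.2
  rw [hasFiniteIntegral_def] at h1
  have e1 : ∀ p : Bdy n × Bdy n, ‖‖g p.1 - g p.2‖ ^ 2 / ‖p.1 - p.2‖ ^ ((n:ℝ)+1)‖ₑ =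
      gk n (p.1 - p.2) * ‖g p.1 - g p.2‖ₑ ^ (2:ℝ) := by
    intro p
    rw [Real.enorm_of_nonneg (by positivity), gk, div_eq_inv_mul, ENNReal.ofReal_mul (by positivity),
      ENNReal.ofReal_pow (norm_nonneg _), ofReal_norm]
    norm_num
  simp only [e1] at h1
  have hm : AEMeasurable (fun p : Bdy n × Bdy n => gk n (p.1 - p.2) * ‖g p.1 - g p.2‖ₑ ^ (2:ℝ))
      ((volume : Measure (Bdy n)).prod volume) := by
    have h2 : AEStronglyMeasurable (fun p : Bdy n × Bdy n => g p.1 - g p.2)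
      ((volume : Measure (Bdy n)).prod volume) := hg.1.comp_fst.sub hg.1.comp_snd
    exact ((gk_meas n).comp (measurable_fst.sub measurable_snd)).aemeasurable.mul (h2.enorm.pow_const _)
  have hT := measurePreserving_add_prod (volume : Measure (Bdy n)) (volume : Measure (Bdy n))
  rw [← hT.map_eq, lintegral_map' (by rw [hT.map_eq]; exact hm) hT.measurable.aemeasurable,
    lintegral_prod _ (by
      have := hm
      rw [← hT.map_eq] at this
      exact this.comp_measurable hT.measurable)] at h1
  refine lt_of_le_of_lt (le_of_eq ?_) h1
  refine lintegral_congr fun w => ?_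
  simp only [add_sub_cancel_right]
  have h3 : ∀ᵐ y, ‖(tau n w G - G : Hbd n) y‖ₑ ^ (2:ℝ) = ‖g (w + y) - g y‖ₑ ^ (2:ℝ) := by
    have h4 := (measurePreserving_add_left volume w).quasiMeasurePreserving.ae_eq_comp hGg
    filter_upwards [Lp.coeFn_sub (tau n w G) G, tau_ae n w G, hGg, h4] with y h5 h6 h7 h8
    rw [h5, Pi.sub_apply, h6, h7]
    simp only [Function.comp] at h8
    rw [h8]
  rw [lintegral_const_mul' (gk n w) _ ENNReal.ofReal_ne_top, enorm_sq, lintegral_congr_ae h3]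

lemma omega_meas (n : ℕ) (G : Hbd n) : Measurable fun w => ‖tau n w G - G‖ₑ :=
  ((tau_cont n G).sub continuous_const).enorm.measurable

lemma scaled_sq (n : ℕ) (G : Hbd n) (r : ℝ) (hr : 0 < r) :
    ∫⁻ z in Metric.ball (0 : Bdy n) 1, ‖tau n (r • z) G - G‖ₑ ^ (2:ℝ) ≤
      ENNReal.ofReal r * ∫⁻ w, gk n w * ‖tau n w G - G‖ₑ ^ (2:ℝ) := by
  have hHm : Measurable fun w => gk n w * ‖tau n w G - G‖ₑ ^ (2:ℝ) :=
    (gk_meas n).mul ((omega_meas n G).pow_const _)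
  have hpt : ∀ z ∈ Metric.ball (0 : Bdy n) 1, ‖tau n (r • z) G - G‖ₑ ^ (2:ℝ) ≤
      ENNReal.ofReal (r ^ ((n:ℝ) + 1)) * (gk n (r • z) * ‖tau n (r • z) G - G‖ₑ ^ (2:ℝ)) := by
    intro z hz
    by_cases h0 : z = 0
    · subst h0; simp [tau_zero]
    have hz1 : ‖z‖ < 1 := by simpa using hz
    have hz0 : 0 < ‖z‖ := norm_pos_iff.2 h0
    rw [← mul_assoc]
    refine le_mul_of_one_le_left zero_le ?_
    rw [gk, ← ENNReal.ofReal_mul (by positivity), ENNReal.one_le_ofReal, norm_smul, Real.norm_of_nonneg hr.le,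
      Real.mul_rpow hr.le hz0.le, mul_inv, ← mul_assoc, mul_inv_cancel₀ (by positivity), one_mul]
    exact (one_le_inv₀ (by positivity)).2 (Real.rpow_le_one hz0.le hz1.le (by positivity))
  calc ∫⁻ z in Metric.ball (0 : Bdy n) 1, ‖tau n (r • z) G - G‖ₑ ^ (2:ℝ)
      ≤ ∫⁻ z in Metric.ball (0 : Bdy n) 1, ENNReal.ofReal (r ^ ((n:ℝ) + 1)) * (gk n (r • z) * ‖tau n (r • z) G - G‖ₑ ^ (2:ℝ)) :=
        setLIntegral_mono' measurableSet_ball hpt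
    _ ≤ ∫⁻ z, ENNReal.ofReal (r ^ ((n:ℝ) + 1)) * (gk n (r • z) * ‖tau n (r • z) G - G‖ₑ ^ (2:ℝ)) :=
        setLIntegral_le_lintegral _ _
    _ = ENNReal.ofReal (r ^ ((n:ℝ) + 1)) * ∫⁻ w, gk n w * ‖tau n w G - G‖ₑ ^ (2:ℝ) ∂(Measure.map (fun x => r • x) volume) := by
        rw [lintegral_const_mul' _ _ ENNReal.ofReal_ne_top, lintegral_map hHm (measurable_const_smul r)]
    _ = _ := by
        rw [Measure.map_addHaar_smul _ hr.ne', lintegral_smul_measure, smul_eq_mul, ← mul_assoc,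
          ← ENNReal.ofReal_mul (by positivity), finrank_euclideanSpace_fin, abs_of_nonneg (by positivity),
          Real.rpow_add hr, Real.rpow_natCast, Real.rpow_one]
        congr 2
        field_simp

lemma scaled_one (n : ℕ) (G : Hbd n) (r : ℝ) (hr : 0 < r) :
    ∫⁻ z in Metric.ball (0 : Bdy n) 1, ‖tau n (r • z) G - G‖ₑ ≤
      ENNReal.ofReal (r ^ (1/2:ℝ)) * ((∫⁻ w, gk n w * ‖tau n w G - G‖ₑ ^ (2:ℝ)) ^ (1/2:ℝ) *
        (volume (Metric.ball (0 : Bdy n) 1)) ^ (1/2:ℝ)) := by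
  have hc : (2:ℝ).HolderConjugate 2 := by rw [Real.holderConjugate_iff]; norm_num
  have := ENNReal.lintegral_mul_le_Lp_mul_Lq (volume.restrict (Metric.ball (0 : Bdy n) 1)) hc
    (f := fun z => ‖tau n (r • z) G - G‖ₑ) (g := fun _ => 1)
    ((omega_meas n G).comp (measurable_const_smul r)).aemeasurable aemeasurable_const
  simp only [Pi.mul_apply, mul_one, ENNReal.one_rpow, lintegral_one, Measure.restrict_apply_univ] at this
  refine this.trans ?_
  rw [← mul_assoc]
  refine mul_le_mul' ?_ le_rfl
  rw [← ENNReal.ofReal_rpow_of_nonneg hr.le (by norm_num), ← ENNReal.mul_rpow_of_nonneg _ _ (by norm_num)]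
  exact ENNReal.rpow_le_rpow (scaled_sq n G r hr) (by norm_num)

lemma avg_symm (n : ℕ) (h : ℝ) (F : Hbd n) :
    avg n h F - F = (2 * vol1 n)⁻¹ • ∫ z in Metric.ball (0 : Bdy n) 1,
      ((tau n (h • z) F - F) + (tau n (-(h • z)) F - F)) := by
  have hv := vol1_pos n
  have hc1 := tau_cont' n h F
  have hc2 : Continuous fun z => tau n (-(h • z)) F :=
    (tau_cont n F).comp (continuous_const_smul h).neg
  have hneg : ∫ z in Metric.ball (0 : Bdy n) 1, tau n (-(h • z)) F =
      ∫ z in Metric.ball (0 : Bdy n) 1, tau n (h • z) F := by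
    have := (Measure.measurePreserving_neg (volume : Measure (Bdy n))).setIntegral_preimage_emb
      (MeasurableEquiv.neg (Bdy n)).measurableEmbedding (fun z => tau n (h • z) F) (Metric.ball 0 1)
    rw [← this]
    have e : (Neg.neg ⁻¹' Metric.ball (0 : Bdy n) 1) = Metric.ball 0 1 := by ext; simp
    rw [e]; simp only [smul_neg]
  have hconst : ∫ z in Metric.ball (0 : Bdy n) 1, F = vol1 n • F := by
    rw [setIntegral_const]; rfl
  have i1 : IntegrableOn (fun z => tau n (h • z) F - F) (Metric.ball 0 1) volume :=
    integrableOn_ball n (hc1.sub continuous_const)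
  have i2 : IntegrableOn (fun z => tau n (-(h • z)) F - F) (Metric.ball 0 1) volume :=
    integrableOn_ball n (hc2.sub continuous_const)
  rw [integral_add i1 i2,
    integral_sub (integrableOn_ball n hc1) (integrableOn_ball n continuous_const),
    integral_sub (integrableOn_ball n hc2) (integrableOn_ball n continuous_const), hneg, hconst, avg_apply,
    ← two_smul ℝ, smul_smul, smul_sub, smul_smul]
  have e1 : (2 * vol1 n)⁻¹ * 2 = (vol1 n)⁻¹ := by field_simp
  have e2 : (2 * vol1 n)⁻¹ * 2 * vol1 n = 1 := by field_simp
  rw [e2, e1, one_smul]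

lemma avg_est (n : ℕ) (F : Hbd n) (f : Bdy n → ℂ) (hF : ⇑F =ᵐ[volume] f) (hf : MemH32B n f) :
    ∃ C : ℝ, ∀ h : ℝ, 0 < h → ‖avg n h F - F‖ ≤ C * h ^ (3/2 : ℝ) := by
  have hv := vol1_pos n
  choose g hg1 hg2 hg3 using hf.2
  set G : Fin n → Hbd n := fun i => (hg2 i).toLp (g i)
  have hGg : ∀ i, ⇑(G i) =ᵐ[volume] g i := fun i => (hg2 i).coeFn_toLp
  have hW : ∀ i, IsWeakDerivB n (bdirs n i) F (G i) := by
    intro i φ hφ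
    have h1 := hg1 i φ hφ
    have h2 : ∫ y, F y * ((fderiv ℝ φ y) (bdirs n i) : ℂ) = ∫ y, f y * ((fderiv ℝ φ y) (bdirs n i) : ℂ) := by
      refine integral_congr_ae ?_
      filter_upwards [hF] with x hx; rw [hx]
    have h3 : ∫ y, G i y * (φ y : ℂ) = ∫ y, g i y * (φ y : ℂ) := by
      refine integral_congr_ae ?_
      filter_upwards [hGg i] with x hx; rw [hx]
    rw [h2, h3, h1]
  set C1 : ENNReal := ∑ i, ((∫⁻ w, gk n w * ‖tau n w (G i) - G i‖ₑ ^ (2:ℝ)) ^ (1/2:ℝ) *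
        (volume (Metric.ball (0 : Bdy n) 1)) ^ (1/2:ℝ)) with hC1
  have hC1t : C1 ≠ ⊤ := by
    rw [hC1]
    refine ENNReal.sum_ne_top.2 fun i _ => ENNReal.mul_ne_top ?_ ?_
    · exact ENNReal.rpow_ne_top_of_nonneg (by norm_num) (gag_lt_top n (g i) (hg2 i) (hg3 i) (G i) (hGg i)).ne
    · exact ENNReal.rpow_ne_top_of_nonneg (by norm_num) measure_ball_lt_top.ne
  refine ⟨(2 * vol1 n)⁻¹ * 2 ^ (1/2:ℝ) * C1.toReal, fun h hh => ?_⟩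
  have key : ‖avg n h F - F‖ₑ ≤ ENNReal.ofReal ((2 * vol1 n)⁻¹) * (ENNReal.ofReal h *
      (ENNReal.ofReal ((2 * h) ^ (1/2:ℝ)) * C1)) := by
    rw [avg_symm, enorm_smul, Real.enorm_of_nonneg (by positivity)]
    refine mul_le_mul' le_rfl ?_
    refine (enorm_integral_le_lintegral_enorm _).trans ?_
    have hmeas : ∀ i, Measurable (Function.uncurry fun (z : Bdy n) (s : ℝ) =>
        ‖tau n ((2 * s * h) • z) (G i) - G i‖ₑ) := by
      intro i
      refine (omega_meas n (G i)).comp (Continuous.measurable ?_)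
      fun_prop
    calc ∫⁻ z in Metric.ball (0 : Bdy n) 1, ‖(tau n (h • z) F - F) + (tau n (-(h • z)) F - F)‖ₑ
        ≤ ∫⁻ z in Metric.ball (0 : Bdy n) 1, ENNReal.ofReal h * ∫⁻ s in Set.Ioc (0:ℝ) 1,
            ∑ i, ‖tau n ((2 * s * h) • z) (G i) - G i‖ₑ := by
          refine setLIntegral_mono' measurableSet_ball fun z hz => ?_
          refine (tau_sub2_enorm n (h • z) F _ (weak_sum n F G hW (h • z))).trans ?_
          rw [← lintegral_const_mul' _ _ ENNReal.ofReal_ne_top]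
          refine lintegral_mono fun s => ?_
          rw [Finset.mul_sum, map_sum, ← Finset.sum_sub_distrib]
          refine (enorm_sum_le _ _).trans (Finset.sum_le_sum fun i _ => ?_)
          rw [map_smul, ← smul_sub, enorm_smul, smul_smul]
          refine mul_le_mul' ?_ le_rfl
          rw [← ofReal_norm, Complex.norm_real]
          refine ENNReal.ofReal_le_ofReal ?_
          have hz1 : ‖z‖ < 1 := by simpa using hz
          have h2 : ‖z i‖ ≤ ‖z‖ := PiLp.norm_apply_le z i
          rw [PiLp.smul_apply, norm_smul, Real.norm_of_nonneg hh.le]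
          nlinarith
      _ = ENNReal.ofReal h * ∑ i, ∫⁻ s in Set.Ioc (0:ℝ) 1, ∫⁻ z in Metric.ball (0 : Bdy n) 1,
            ‖tau n ((2 * s * h) • z) (G i) - G i‖ₑ := by
          rw [lintegral_const_mul' _ _ ENNReal.ofReal_ne_top]
          congr 1
          rw [lintegral_lintegral_swap]
          · rw [← lintegral_finsetSum']
            · refine lintegral_congr fun s => ?_
              rw [lintegral_finsetSum']
              intro i _
              exact ((hmeas i).comp (measurable_id.prodMk measurable_const)).aemeasurable
            · intro i _
              exact (Measurable.lintegral_prod_left (hmeas i)).aemeasurable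
          · refine Measurable.aemeasurable ?_
            exact Finset.measurable_sum _ fun i _ => hmeas i
      _ ≤ ENNReal.ofReal h * ∑ i, ∫⁻ s in Set.Ioc (0:ℝ) 1, ENNReal.ofReal ((2 * h) ^ (1/2:ℝ)) *
           ((∫⁻ w, gk n w * ‖tau n w (G i) - G i‖ₑ ^ (2:ℝ)) ^ (1/2:ℝ) *
        (volume (Metric.ball (0 : Bdy n) 1)) ^ (1/2:ℝ)) := by
          refine mul_le_mul' le_rfl (Finset.sum_le_sum fun i _ => ?_)
          refine setLIntegral_mono' measurableSet_Ioc fun s hs => ?_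
          refine (scaled_one n (G i) (2 * s * h) (by have := hs.1; positivity)).trans ?_
          refine mul_le_mul' (ENNReal.ofReal_le_ofReal ?_) le_rfl
          refine Real.rpow_le_rpow (by have := hs.1; positivity) ?_ (by norm_num)
          nlinarith [hs.2]
      _ = _ := by
          simp only [setLIntegral_const, Real.volume_Ioc, sub_zero, ENNReal.ofReal_one, mul_one]
          rw [hC1, Finset.mul_sum, Finset.mul_sum, Finset.mul_sum]
  rw [← ofReal_norm, ← ENNReal.ofReal_toReal hC1t, ← ENNReal.ofReal_mul (by positivity),
    ← ENNReal.ofReal_mul (by positivity), ← ENNReal.ofReal_mul (by positivity)] at key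
  refine ((ENNReal.ofReal_le_ofReal_iff (by positivity)).1 key).trans_eq ?_
  rw [Real.mul_rpow (by norm_num) hh.le, show (3/2:ℝ) = 1 + 1/2 by norm_num, Real.rpow_add hh, Real.rpow_one]
  ring

end RobinHS

namespace RobinHS

/-- finite `ℓ^p` norm -/
def Np {m : ℕ} {n : ℕ} (p : ℝ) (v : Fin m → Hbd n) : ℝ := (∑ i, ‖v i‖ ^ p) ^ (1 / p)

lemma Np_add {m n : ℕ} (p : ℝ) (hp : 1 ≤ p) (v w : Fin m → Hbd n) :
    Np p (fun i => v i + w i) ≤ Np p v + Np p w := by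
  refine le_trans ?_ (Real.Lp_add_le_of_nonneg (f := fun i => ‖v i‖) (g := fun i => ‖w i‖) Finset.univ hp
    (fun i _ => norm_nonneg _) (fun i _ => norm_nonneg _))
  unfold Np
  have : 0 < p := by linarith
  gcongr
  exact norm_add_le _ _

lemma exists_mul (n : ℕ) (α : Bdy n → ℂ) (hα : MemLp α ⊤ (volume : Measure (Bdy n))) :
    ∃ A : Hbd n →L[ℂ] Hbd n, ∀ u, ⇑(A u) =ᵐ[volume] fun x => α x * u x := by
  have hm : ∀ u : Hbd n, MemLp (fun x => α x * u x) 2 (volume : Measure (Bdy n)) := fun u =>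
    (Lp.memLp u).mul hα
  refine ⟨LinearMap.mkContinuous
    { toFun := fun u => (hm u).toLp _
      map_add' := fun u v => ?_
      map_smul' := fun c u => ?_ } (eLpNorm α ⊤ volume).toReal ?_, fun u => (hm u).coeFn_toLp⟩
  · apply Lp.ext
    filter_upwards [(hm (u + v)).coeFn_toLp, (hm u).coeFn_toLp, (hm v).coeFn_toLp, Lp.coeFn_add u v,
      Lp.coeFn_add ((hm u).toLp _) ((hm v).toLp _)] with x h1 h2 h3 h4 h5
    rw [h1, h5, Pi.add_apply, h2, h3, h4, Pi.add_apply]; ring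
  · apply Lp.ext
    filter_upwards [(hm (c • u)).coeFn_toLp, (hm u).coeFn_toLp, Lp.coeFn_smul c u,
      Lp.coeFn_smul c ((hm u).toLp _)] with x h1 h2 h3 h4
    simp only [RingHom.id_apply]
    rw [h1, h4, Pi.smul_apply, h2, h3, Pi.smul_apply, smul_eq_mul, smul_eq_mul]; ring
  · intro u
    simp only [LinearMap.coe_mk, AddHom.coe_mk]
    have hle : eLpNorm (fun x => α x * u x) 2 volume ≤ eLpNorm α ⊤ volume * eLpNorm (⇑u) 2 volume :=
      eLpNorm_smul_le_eLpNorm_top_mul_eLpNorm 2 (Lp.aestronglyMeasurable u) α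
    rw [Lp.norm_toLp, Lp.norm_def, ← ENNReal.toReal_mul]
    exact ENNReal.toReal_mono (ENNReal.mul_ne_top hα.2.ne (Lp.memLp u).2.ne) hle

lemma np_bound (n : ℕ) (α : Bdy n → ℂ) (p : ℝ) (hp : 2 ≤ p)
    (hα : MemLp α (ENNReal.ofReal p) (volume : Measure (Bdy n)))
    (A : Hbd n →L[ℂ] Hbd n) (hA : ∀ u, ⇑(A u) =ᵐ[volume] fun x => α x * u x)
    {K : Type} [NormedAddCommGroup K] [InnerProductSpace ℂ K]
    [CompleteSpace K] (S : K →L[ℂ] Hbd n) (k : ℕ) (m : ℕ) (e : Fin m → K)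
    (he : Orthonormal ℂ e) :
    Np p (fun i => A (avg n ((1/2) ^ k) (S (e i)))) ≤
      ((∫⁻ x, ‖α x‖ₑ ^ p).toReal * (vol1 n)⁻¹) ^ (1 / p) * (((2:ℝ) ^ n) ^ (1 / p)) ^ k * ‖S‖ := by
  have hp0 : 0 < p := by linarith
  have hv := vol1_pos n
  have h1 := sum_bound n α p hp hα S ((1/2) ^ k) (by positivity) m e he
    (fun i => A (avg n ((1/2) ^ k) (S (e i)))) (fun i => hA _)
  have h2 := Real.rpow_le_rpow (Finset.sum_nonneg fun i _ => by positivity) h1 (show 0 ≤ 1 / p by positivity)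
  refine h2.trans_eq ?_
  rw [Real.mul_rpow (by positivity) (by positivity), ← Real.rpow_mul (norm_nonneg _), mul_one_div_cancel hp0.ne',
    Real.rpow_one, mul_inv, ← mul_assoc, Real.mul_rpow (by positivity) (by positivity)]
  congr 2
  rw [← Real.rpow_natCast (((2:ℝ) ^ n) ^ (1 / p)), ← Real.rpow_mul (by positivity), mul_comm (1 / p),
    Real.rpow_mul (by positivity), Real.rpow_natCast]
  congr 1
  rw [← pow_mul, ← pow_mul, mul_comm k n, one_div, inv_pow, inv_inv]

set_option maxHeartbeats 4000000 in
theorem main (n : ℕ) (K : Type) [NormedAddCommGroup K]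
    [InnerProductSpace ℂ K] [CompleteSpace K] (K₀ : K →L[ℂ] Hbd n)
    (hran : ∀ u : K, ∃ f : Bdy n → ℂ, ⇑(K₀ u) =ᵐ[volume] f ∧ MemH32B n f)
    (α : Bdy n → ℂ) (hα : MemLp α ⊤ volume) (p : ℝ) (hp2 : 2 ≤ p) (hpn : 2 * (n : ℝ) / 3 < p)
    (hαp : MemLp α (ENNReal.ofReal p) volume) (T : K →L[ℂ] Hbd n)
    (hT : ∀ u, ⇑(T u) =ᵐ[volume] fun y => α y * (K₀ u) y) : MemSchatten p T := by
  have hp0 : 0 < p := by linarith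
  obtain ⟨A, hA⟩ := exists_mul n α hα
  have hTA : ∀ u, T u = A (K₀ u) := fun u => Lp.ext ((hT u).trans (hA _).symm)
  set M : ℕ → Hbd n →L[ℂ] Hbd n := fun k => avg n ((1/2) ^ k) with hM
  set σ : ℝ := (1/2:ℝ) ^ (3/2:ℝ) with hσ
  have hσ0 : 0 < σ := by positivity
  have hσ1 : σ < 1 := Real.rpow_lt_one (by norm_num) (by norm_num) (by norm_num)
  have hσk : ∀ k : ℕ, ((1/2:ℝ) ^ k) ^ (3/2:ℝ) = σ ^ k := by
    intro k
    rw [hσ, ← Real.rpow_natCast, ← Real.rpow_mul (by norm_num), mul_comm, Real.rpow_mul (by norm_num),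
      Real.rpow_natCast]
  -- uniform boundedness
  have hC : ∃ C, ∀ k : ℕ, ‖((σ ^ k)⁻¹ : ℂ) • ((M k).comp K₀ - K₀)‖ ≤ C := by
    refine banach_steinhaus fun u => ?_
    obtain ⟨f, hf1, hf2⟩ := hran u
    obtain ⟨C, hC⟩ := avg_est n (K₀ u) f hf1 hf2
    refine ⟨C, fun k => ?_⟩
    have h1 := hC ((1/2) ^ k) (by positivity)
    rw [hσk] at h1
    rw [smul_apply, norm_smul, norm_inv, norm_pow, Complex.norm_real, Real.norm_of_nonneg hσ0.le,
      inv_mul_le_iff₀ (by positivity), mul_comm]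
    exact h1
  obtain ⟨C, hC⟩ := hC
  have hC' : ∀ k, ‖(M k).comp K₀ - K₀‖ ≤ C * σ ^ k := by
    intro k
    have := hC k
    rw [norm_smul, norm_inv, norm_pow, Complex.norm_real, Real.norm_of_nonneg hσ0.le,
      inv_mul_le_iff₀ (by positivity), mul_comm] at this
    exact this
  have hC0 : 0 ≤ C := by simpa using (norm_nonneg _).trans (hC' 0)
  set D : ℕ → K →L[ℂ] Hbd n := fun k => (M (k+1)).comp K₀ - (M k).comp K₀ with hD
  have hDn : ∀ k, ‖D k‖ ≤ 2 * C * σ ^ k := by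
    intro k
    have e : D k = ((M (k+1)).comp K₀ - K₀) - ((M k).comp K₀ - K₀) := by rw [hD]; simp
    rw [e]
    refine (norm_sub_le _ _).trans ?_
    have h1 := hC' (k+1)
    have h2 := hC' k
    have h3 : C * σ ^ (k+1) ≤ C * σ ^ k :=
      mul_le_mul_of_nonneg_left (pow_le_pow_of_le_one hσ0.le hσ1.le (Nat.le_succ k)) hC0
    linarith
  set ρ : ℝ := ((2:ℝ) ^ n) ^ (1 / p) with hρ
  have hρ0 : 0 < ρ := by positivity
  have hρσ : ρ * σ < 1 := by
    have e1 : ρ = (2:ℝ) ^ ((n:ℝ) / p) := by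
      rw [hρ, ← Real.rpow_natCast, ← Real.rpow_mul (by norm_num), mul_one_div]
    have e2 : σ = (2:ℝ) ^ (-(3/2:ℝ)) := by
      rw [hσ, one_div, Real.inv_rpow (by norm_num), Real.rpow_neg (by norm_num)]
    rw [e1, e2, ← Real.rpow_add (by norm_num)]
    refine Real.rpow_lt_one_of_one_lt_of_neg (by norm_num) ?_
    have : (n:ℝ) / p < 3 / 2 := by rw [div_lt_iff₀ hp0]; linarith
    linarith
  set B : ℝ := ((∫⁻ x, ‖α x‖ₑ ^ p).toReal * (vol1 n)⁻¹) ^ (1 / p) with hB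
  have hB0 : 0 ≤ B := by
    have := vol1_pos n
    positivity
  have hnp : ∀ (S : K →L[ℂ] Hbd n) (k m : ℕ) (e : Fin m → K), Orthonormal ℂ e →
      Np p (fun i => A (M k (S (e i)))) ≤ B * ρ ^ k * ‖S‖ := fun S k m e he =>
    np_bound n α p hp2 hαp A hA S k m e he
  set E : ℝ := B * (2 * C) * (ρ + 1) with hE
  have hE0 : 0 ≤ E := by positivity
  have hstep : ∀ (N m : ℕ) (e : Fin m → K), Orthonormal ℂ e →
      Np p (fun i => A (M N (M N (K₀ (e i))))) ≤ B * ‖K₀‖ + ∑ k ∈ Finset.range N, E * (ρ * σ) ^ k := by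
    intro N m e he
    induction N with
    | zero =>
      have h1 := hnp ((M 0).comp K₀) 0 m e he
      simp only [ContinuousLinearMap.comp_apply, pow_zero, mul_one] at h1
      simp only [Finset.range_zero, Finset.sum_empty, add_zero]
      refine h1.trans (mul_le_mul_of_nonneg_left ?_ hB0)
      refine (ContinuousLinearMap.opNorm_comp_le _ _).trans ?_
      exact mul_le_of_le_one_left (norm_nonneg _) (avg_norm_le n _)
    | succ N ih =>
      have e1 : (fun i => A (M (N+1) (M (N+1) (K₀ (e i))))) = fun i =>
          A (M N (M N (K₀ (e i)))) + (A (M (N+1) (D N (e i))) + A (M N (D N (e i)))) := by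
        ext1 i
        simp only [hD, ContinuousLinearMap.sub_apply, ContinuousLinearMap.comp_apply, map_sub]
        have : M (N+1) (M N (K₀ (e i))) = M N (M (N+1) (K₀ (e i))) := avg_comm n _ _ _
        rw [this]; abel
      rw [e1, Finset.sum_range_succ, ← add_assoc]
      refine (Np_add p (by linarith) _ _).trans (add_le_add ih ?_)
      refine (Np_add p (by linarith) _ _).trans ((add_le_add (hnp (D N) (N+1) m e he) (hnp (D N) N m e he)).trans ?_)
      calc B * ρ ^ (N+1) * ‖D N‖ + B * ρ ^ N * ‖D N‖ = B * (ρ + 1) * ρ ^ N * ‖D N‖ := by ring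
        _ ≤ B * (ρ + 1) * ρ ^ N * (2 * C * σ ^ N) := by gcongr; exact hDn N
        _ = E * (ρ * σ) ^ N := by rw [hE, mul_pow]; ring
  have hρσ0 : 0 ≤ ρ * σ := by positivity
  set Q : ℝ := B * ‖K₀‖ + E * (1 - ρ * σ)⁻¹ with hQ
  have hbound : ∀ (N m : ℕ) (e : Fin m → K), Orthonormal ℂ e →
      Np p (fun i => A (M N (M N (K₀ (e i))))) ≤ Q := by
    intro N m e he
    refine (hstep N m e he).trans ?_
    rw [hQ, ← Finset.mul_sum]
    gcongr
    rw [← tsum_geometric_of_lt_one hρσ0 hρσ]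
    exact (summable_geometric_of_lt_one hρσ0 hρσ).sum_le_tsum _ (fun _ _ => by positivity)
  have hQ0 : 0 ≤ Q := by
    have : 0 < 1 - ρ * σ := by linarith
    positivity
  have hlim : ∀ u, Tendsto (fun N => M N (M N (K₀ u))) atTop (𝓝 (K₀ u)) := by
    intro u
    rw [tendsto_iff_norm_sub_tendsto_zero]
    have hb : ∀ N, ‖M N (M N (K₀ u)) - K₀ u‖ ≤ 2 * (C * σ ^ N * ‖u‖) := by
      intro N
      have h1 : ‖M N (K₀ u) - K₀ u‖ ≤ C * σ ^ N * ‖u‖ := by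
        have := ((M N).comp K₀ - K₀).le_of_opNorm_le (hC' N) u
        simpa using this
      have h2 : ‖M N (M N (K₀ u) - K₀ u)‖ ≤ ‖M N (K₀ u) - K₀ u‖ := by
        have := (M N).le_of_opNorm_le (avg_norm_le n _) (M N (K₀ u) - K₀ u)
        rwa [one_mul] at this
      have e : M N (M N (K₀ u)) - K₀ u = M N (M N (K₀ u) - K₀ u) + (M N (K₀ u) - K₀ u) := by
        rw [map_sub]; abel
      rw [e]
      refine (norm_add_le _ _).trans ?_
      linarith
    refine squeeze_zero (fun _ => norm_nonneg _) hb ?_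
    have := (((tendsto_pow_atTop_nhds_zero_of_lt_one hσ0.le hσ1).const_mul C).mul_const ‖u‖).const_mul 2
    simpa using this
  refine memSchatten_of_bound T p hp0 (Q ^ p) fun m e he => ?_
  simp only [hTA]
  have hl : Tendsto (fun N => ∑ i, ‖A (M N (M N (K₀ (e i))))‖ ^ p) atTop (𝓝 (∑ i, ‖A (K₀ (e i))‖ ^ p)) := by
    refine tendsto_finsetSum _ fun i _ => ?_
    refine Tendsto.rpow_const ?_ (Or.inr hp0.le)
    exact ((A.continuous.tendsto _).comp (hlim (e i))).norm
  refine le_of_tendsto' hl fun N => ?_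
  have h1 := hbound N m e he
  unfold Np at h1
  have h2 := Real.rpow_le_rpow (by positivity) h1 hp0.le
  rwa [← Real.rpow_mul (by positivity), one_div_mul_cancel hp0.ne', Real.rpow_one] at h2

end RobinHS

namespace RobinHS

theorem statement7 (n : ℕ) (hn : 1 ≤ n) (K : Type) [NormedAddCommGroup K]
    [InnerProductSpace ℂ K] [CompleteSpace K] (K₀ : K →L[ℂ] Hbd n)
    (hran : ∀ u : K, ∃ f : Bdy n → ℂ, ⇑(K₀ u) =ᵐ[(volume : Measure (Bdy n))] f ∧ MemH32B n f)
    (α : Bdy n → ℂ) (hα : MemLp α ⊤ (volume : Measure (Bdy n)))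
    (p : ℝ) (hp2 : 2 ≤ p) (hpn : 2 * (n : ℝ) / 3 < p)
    (hαp : MemLp α (ENNReal.ofReal p) (volume : Measure (Bdy n)))
    (T : K →L[ℂ] Hbd n)
    (hT : ∀ u : K, ⇑(T u) =ᵐ[(volume : Measure (Bdy n))] fun y => α y * (K₀ u) y) :
    MemSchatten p T := by
  exact main n K K₀ hran α hα p hp2 hpn hαp T hT

end RobinHS
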